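/- arXiv:1104.0568 — 4 statements merged into one kernel-verified Lean document; each statement's English description precedes it below -/
import Mathlib

section
/- Let n ≥ 1, let 𝒯 = (T_1,...,T_n) be any tree sequence of order n and let k = (k_1,...,k_n) ∈ ℤ^n. Then the signed enumeration L_n(𝒯,k) of Gelfand-Tsetlin tree sequences associated with 𝒯 and k satisfies L_n(𝒯,k) · ∏_{1 ≤ i < j ≤ n} (j − i) = ∏_{1 ≤ i < j ≤ n} (k_j − k_i + j − i). -/
/-- The simple graph underlying a directed edge labeling. -/
def treeRel {n : ℕ} (e : Fin (n - 1) → Fin n × Fin n) : SimpleGraph (Fin n) :=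
  SimpleGraph.fromRel (fun p q => ∃ j, e j = (p, q))

/-- An `n`-tree: a directed tree whose `n` vertices are identified with `1, …, n`
(here `Fin n`) and whose `n - 1` edges are identified with `1', …, (n-1)'`
(here `Fin (n-1)`); `edge j = (p, q)` means the edge `j'` is directed from `p` to `q`. -/
structure NTree (n : ℕ) where
  edge : Fin (n - 1) → Fin n × Fin n
  loopless : ∀ j, (edge j).1 ≠ (edge j).2
  edgeInj : ∀ j j' : Fin (n - 1),
    (edge j = edge j' ∨ edge j = ((edge j').2, (edge j').1)) → j = j'
  conn : (treeRel edge).Connected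

/-- The head of the edge `j'` with respect to the standard orientation away from
the root `r`: the endpoint farther from `r`. -/
noncomputable def stdHead {n : ℕ} (T : NTree n) (r : Fin n) (j : Fin (n - 1)) : Fin n :=
  if (treeRel T.edge).dist r (T.edge j).1 < (treeRel T.edge).dist r (T.edge j).2
    then (T.edge j).2 else (T.edge j).1

/-- The permutation `π` of the vertices: first the root, then the standard heads of the
edges `1', 2', …, (n-1)'` in this order. -/
noncomputable def permFun {n : ℕ} (T : NTree n) (r : Fin n) : Fin n → Fin n :=
  fun m => if h : m.1 = 0 then r else stdHead T r ⟨m.1 - 1, by have := m.isLt; omega⟩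

/-- The sign of an `n`-tree with respect to a root `r`:
`(-1) ^ (number of reversed edges) * sgn π`. -/
noncomputable def treeSignAt {n : ℕ} (T : NTree n) (r : Fin n) : ℤ :=
  (-1) ^ (Finset.univ.filter
      (fun j : Fin (n - 1) => stdHead T r j ≠ (T.edge j).2)).card *
    (if h : Function.Bijective (permFun T r) then
      ((Equiv.Perm.sign (Equiv.ofBijective (permFun T r) h) : ℤˣ) : ℤ) else 1)

/-- The sign of an `n`-tree (independent of the root; we use the vertex `1`). -/
noncomputable def treeSign {n : ℕ} (T : NTree n) : ℤ :=
  if h : 0 < n then treeSignAt T ⟨0, h⟩ else 1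

/-- `l` is admissible for `(T, k)`: for each edge `j' = (p, q)`,
if `k p + p < k q + q` then `k p + p ≤ l j + j < k q + q`, and otherwise
`k q + q ≤ l j + j < k p + p` (all indices are 1-based in the paper, so a vertex
`p : Fin n` carries the label `k p + (p + 1)` and an edge `j : Fin (n-1)` the label
`l j + (j + 1)`). -/
def Admissible {n : ℕ} (T : NTree n) (k : Fin n → ℤ) (l : Fin (n - 1) → ℤ) : Prop :=
  ∀ j : Fin (n - 1),
    if k (T.edge j).1 + ((T.edge j).1.1 : ℤ) + 1 < k (T.edge j).2 + ((T.edge j).2.1 : ℤ) + 1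
    then k (T.edge j).1 + ((T.edge j).1.1 : ℤ) + 1 ≤ l j + (j.1 : ℤ) + 1 ∧
         l j + (j.1 : ℤ) + 1 < k (T.edge j).2 + ((T.edge j).2.1 : ℤ) + 1
    else k (T.edge j).2 + ((T.edge j).2.1 : ℤ) + 1 ≤ l j + (j.1 : ℤ) + 1 ∧
         l j + (j.1 : ℤ) + 1 < k (T.edge j).1 + ((T.edge j).1.1 : ℤ) + 1

/-- The number of inversions of the pair `(T, k)`: edges `j' = (p, q)` with
`¬ (k p + p < k q + q)`. -/
def invCount {n : ℕ} (T : NTree n) (k : Fin n → ℤ) : ℕ :=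
  (Finset.univ.filter (fun j : Fin (n - 1) =>
    ¬ (k (T.edge j).1 + ((T.edge j).1.1 : ℤ) + 1 <
        k (T.edge j).2 + ((T.edge j).2.1 : ℤ) + 1))).card

/-- A tree sequence of order `n`: `T_1, …, T_n` where `T_i` is an `i`-tree. -/
def TreeSeq (n : ℕ) := ∀ i : Fin n, NTree (i.1 + 1)

/-- A Gelfand-Tsetlin tree sequence associated with `𝒯` and `k`: a sequence of
labelings `L i : Fin (i+1) → ℤ` with top labeling `k` and such that each `L (i-1)`
is admissible for `(T_{i+1}, L i)`. -/
def IsGTTreeSeq {n : ℕ} (𝒯 : TreeSeq n) (k : Fin n → ℤ)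
    (L : ∀ i : Fin n, Fin (i.1 + 1) → ℤ) : Prop :=
  (∀ i : Fin n, i.1 + 1 = n → ∀ j : Fin (i.1 + 1),
      L i j = k ⟨j.1, by have := j.isLt; omega⟩) ∧
  ∀ i : Fin n, ∀ hi : 0 < i.1,
    Admissible (𝒯 i) (L i)
      (fun j => L ⟨i.1 - 1, by have := i.isLt; omega⟩
        ⟨j.1, by have := j.isLt; show j.1 < i.1 - 1 + 1; omega⟩)

/-- The sign of a Gelfand-Tsetlin tree sequence:
`(-1) ^ (number of inversions) * sgn 𝒯`. -/
noncomputable def gtSign {n : ℕ} (𝒯 : TreeSeq n)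
    (L : ∀ i : Fin n, Fin (i.1 + 1) → ℤ) : ℤ :=
  (-1) ^ (∑ i : Fin n, invCount (𝒯 i) (L i)) * ∏ i : Fin n, treeSign (𝒯 i)

/-- `L_n(𝒯, k)`: the signed enumeration of all Gelfand-Tsetlin tree sequences
associated with `𝒯` and `k`. -/
noncomputable def Lsum {n : ℕ} (𝒯 : TreeSeq n) (k : Fin n → ℤ) : ℤ :=
  ∑ᶠ L ∈ {L : ∀ i : Fin n, Fin (i.1 + 1) → ℤ | IsGTTreeSeq 𝒯 k L}, gtSign 𝒯 L

/-!
Give the vertex `v` the shifted label `x v = k v + v`. By induction on `n`, the signed enumeration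
is the determinant of the matrix of binomial coefficients `C(x v, i)`, `0 ≤ i < n`, which no longer
depends on the trees; Vandermonde's formula evaluates it.

For the induction step, multiply this matrix by the signed incidence matrix of the largest tree,
with one extra row marking the root. Order the vertices by their distance to the root: since the
standard head of an edge is farther from the root than the other endpoint, only the permutation `π`
contributes to the determinant of the incidence matrix, which is therefore the sign of the tree. In
the product, the edge `(p, q)` contributes the row of differences `C(x q, i + 1) - C(x p, i + 1)`,
and each of these telescopes to the sum of `C(y, i)` over the labels `y` admissible for that edge,
negated at an inversion. Multilinearity of the determinant turns these row sums into the sum over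
all admissible labelings of the determinants of order `n - 1`.
-/

section ProductsAndDeterminants

variable {R : Type*} [CommRing R]

lemma prod_ite_neg_one {M ι : Type*} [CommMonoid M] [HasDistribNeg M] (s : Finset ι)
    (p : ι → Prop) [DecidablePred p] :
    ∏ i ∈ s, (if p i then (-1 : M) else 1) = (-1) ^ (s.filter p).card := by
  rw [Finset.prod_ite, Finset.prod_const, Finset.prod_const_one, mul_one]

lemma prod_Iio_natCast_sub {n : ℕ} (q : Fin n) :
    ∏ p ∈ Finset.Iio q, ((q.1 : R) - (p.1 : R)) = q.1.factorial := by
  calc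
    _ = ∏ m ∈ Finset.Iio q.1, ((q.1 : R) - (m : R)) := by
      rw [← Fin.map_valEmbedding_Iio, Finset.prod_map]
      rfl
    _ = q.1.factorial := by
      rw [Nat.Iio_eq_range, Finset.prod_range_natCast_sub, ← Nat.descFactorial_eq_prod_range,
        Nat.descFactorial_self]

lemma det_of_column_zero_eq_zero {n : ℕ} (A : Matrix (Fin (n + 1)) (Fin (n + 1)) R)
    (h : ∀ j : Fin n, A j.succ 0 = 0) :
    A.det = A 0 0 * (A.submatrix Fin.succ Fin.succ).det := by
  rw [Matrix.det_succ_column_zero, Fin.sum_univ_succ]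
  simp [h]

variable {m : Type*} [Fintype m] [DecidableEq m]

lemma det_of_sum_rows {α : Type*} (s : m → Finset α) (f : m → α → m → R) :
    (Matrix.of fun j i => ∑ y ∈ s j, f j y i).det =
      ∑ l ∈ Fintype.piFinset s, (Matrix.of fun j => f j (l j)).det := by
  have rows : (Matrix.of fun j i => ∑ y ∈ s j, f j y i) = fun j => ∑ y ∈ s j, f j y := by
    ext j i
    exact (Finset.sum_apply i (s j) (f j)).symm
  rw [rows]
  exact (Matrix.detRowAlternating (R := R)).toMultilinearMap.map_sum_finset f s

lemma det_eq_prod_diag_of_forall_le {α : Type*} [LinearOrder α] (A : Matrix m m R) (b : m → α)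
    (h : ∀ i j, i ≠ j → b i ≤ b j → A i j = 0) : A.det = ∏ i, A i i := by
  rw [Matrix.det_apply, Finset.sum_eq_single 1 _ (by simp)]
  · simp
  intro σ _ hσ
  -- Among the points moved by `σ`, one maximizing `b` is hit by a vanishing entry.
  obtain ⟨i, hi, hmax⟩ := σ.support.exists_max_image b <| by
    rwa [Finset.nonempty_iff_ne_empty, ne_eq, Equiv.Perm.support_eq_empty_iff]
  have hne : σ i ≠ i := Equiv.Perm.mem_support.1 hi
  rw [Finset.prod_eq_zero (Finset.mem_univ i), smul_zero]
  exact h _ _ hne (hmax _ (Equiv.Perm.apply_mem_support.2 hi))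

end ProductsAndDeterminants

section BinomialMatrix

variable {R : Type*} [CommRing R] [BinomialRing R]

/-- The matrix with rows `(1, x v, C(x v, 2), C(x v, 3), …)`: the Vandermonde matrix in the basis
of binomial polynomials, which, unlike monomials, telescope under summation. -/
def binomialMatrix {n : ℕ} (x : Fin n → R) : Matrix (Fin n) (Fin n) R :=
  Matrix.of fun v i => Ring.choose (x v) i.1

lemma det_binomialMatrix_mul_prod_factorial {n : ℕ} (x : Fin n → R) :
    (binomialMatrix x).det * ∏ i : Fin n, (i.1.factorial : R) = (Matrix.vandermonde x).det := by
  nontriviality R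
  rw [Matrix.det_eval_matrixOfPolynomials_eq_det_vandermonde x
    (fun i => (descPochhammer ℤ i.1).map (algebraMap ℤ R))
    (fun i => by rw [(monic_descPochhammer ℤ i.1).natDegree_map, descPochhammer_natDegree])
    (fun i => (monic_descPochhammer ℤ i.1).map _), mul_comm, ← Matrix.det_mul_row]
  congr 1
  ext v i
  simp only [binomialMatrix, Matrix.of_apply, Polynomial.eval_map_algebraMap,
    Polynomial.aeval_eq_smeval, Ring.descPochhammer_eq_factorial_smul_choose, nsmul_eq_mul]

lemma det_binomialMatrix_mul_prod_sub {n : ℕ} (x : Fin n → R) :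
    (binomialMatrix x).det * ∏ q : Fin n, ∏ p ∈ Finset.Iio q, ((q.1 : R) - (p.1 : R)) =
      ∏ q : Fin n, ∏ p ∈ Finset.Iio q, (x q - x p) := by
  simp_rw [prod_Iio_natCast_sub, det_binomialMatrix_mul_prod_factorial, Matrix.det_vandermonde]
  exact Finset.prod_comm' (by simp)

end BinomialMatrix

section IntervalSums

lemma sum_Ico_add_one_sub {A : Type*} [AddCommGroup A] (f : ℤ → A) {a b : ℤ} (hab : a ≤ b) :
    ∑ y ∈ Finset.Ico a b, (f (y + 1) - f y) = f b - f a := by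
  induction b, hab using Int.leInduction with
  | base => simp
  | succ b hab ih =>
    rw [← Finset.insert_Ico_right_eq_Ico_add_one hab, Finset.sum_insert (by simp), ih]
    abel

lemma sum_Ico_int_choose {a b : ℤ} (hab : a ≤ b) (i : ℕ) :
    ∑ y ∈ Finset.Ico a b, Ring.choose y i = Ring.choose b (i + 1) - Ring.choose a (i + 1) := by
  simp [← sum_Ico_add_one_sub (fun y => Ring.choose y (i + 1)) hab, Ring.choose_succ_succ]

lemma sign_mul_sum_Ico_min_max_choose (a b : ℤ) (i : ℕ) :
    (if ¬ a < b then -1 else 1) * ∑ y ∈ Finset.Ico (min a b) (max a b), Ring.choose y i =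
      Ring.choose b (i + 1) - Ring.choose a (i + 1) := by
  rw [sum_Ico_int_choose min_le_max]
  rcases lt_or_ge a b with h | h
  · simp [h, h.le]
  · simp [h, h.not_gt]

end IntervalSums

namespace NTree

/-- The endpoint of the edge `j'` closer to the root `r`, complementary to `stdHead`. -/
noncomputable def stdTail {n : ℕ} (T : NTree n) (r : Fin n) (j : Fin (n - 1)) : Fin n :=
  if (treeRel T.edge).dist r (T.edge j).1 < (treeRel T.edge).dist r (T.edge j).2
    then (T.edge j).1 else (T.edge j).2

lemma exists_stdTail_stdHead_eq {n : ℕ} (T : NTree n) {r u v : Fin n}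
    (hadj : (treeRel T.edge).Adj u v)
    (hlt : (treeRel T.edge).dist r u < (treeRel T.edge).dist r v) :
    ∃ j, stdTail T r j = u ∧ stdHead T r j = v := by
  obtain ⟨-, ⟨j, hj⟩ | ⟨j, hj⟩⟩ := (SimpleGraph.fromRel_adj _ _ _).1 hadj
  · exact ⟨j, by simp [stdTail, hj, hlt], by simp [stdHead, hj, hlt]⟩
  · exact ⟨j, by simp [stdTail, hj, hlt.not_gt], by simp [stdHead, hj, hlt.not_gt]⟩

lemma exists_stdHead_eq_of_ne_root {n : ℕ} (T : NTree n) {r v : Fin n} (hv : v ≠ r) :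
    ∃ j, stdHead T r j = v ∧
      (treeRel T.edge).dist r (stdTail T r j) < (treeRel T.edge).dist r v := by
  obtain ⟨w, hw⟩ := T.conn.exists_walk_length_eq_dist v r
  cases w with
  | nil => exact absurd rfl hv
  | @cons _ u _ hadj w =>
    have hlt : (treeRel T.edge).dist r u < (treeRel T.edge).dist r v := by
      have hle := SimpleGraph.dist_le w
      rw [SimpleGraph.Walk.length_cons] at hw
      rw [SimpleGraph.dist_comm, SimpleGraph.dist_comm (u := r)]
      lia
    obtain ⟨j, htail, hhead⟩ := T.exists_stdTail_stdHead_eq hadj.symm hlt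
    exact ⟨j, hhead, htail ▸ hlt⟩

variable {n : ℕ} (T : NTree (n + 1)) (r : Fin (n + 1))

lemma permFun_bijective : Function.Bijective (permFun T r) := by
  refine Function.Surjective.bijective_of_finite fun v => ?_
  by_cases hv : v = r
  · exact ⟨0, hv.symm⟩
  · obtain ⟨j, hj, -⟩ := T.exists_stdHead_eq_of_ne_root hv
    exact ⟨Fin.succ (n := n) j, hj⟩

lemma stdHead_injective : Function.Injective (stdHead T r) := fun _ _ h =>
  Fin.succ_injective n ((T.permFun_bijective r).injective h)

lemma stdHead_ne_root (j : Fin n) : stdHead T r j ≠ r := fun h =>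
  Fin.succ_ne_zero j ((T.permFun_bijective r).injective h)

lemma dist_stdTail_lt_dist_stdHead (j : Fin n) :
    (treeRel T.edge).dist r (stdTail T r j) < (treeRel T.edge).dist r (stdHead T r j) := by
  obtain ⟨j', hhead, hlt⟩ := T.exists_stdHead_eq_of_ne_root (T.stdHead_ne_root r j)
  rwa [T.stdHead_injective r hhead] at hlt

/-- The permutation `π` in the definition of the sign of a tree. -/
noncomputable def perm : Equiv.Perm (Fin (n + 1)) :=
  Equiv.ofBijective (permFun T r) (T.permFun_bijective r)

lemma perm_zero : T.perm r 0 = r := rfl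

lemma perm_succ (j : Fin n) : T.perm r j.succ = stdHead T r j := rfl

lemma treeSign_eq :
    treeSign T = (-1) ^ (Finset.univ.filter
      fun j : Fin n => stdHead T 0 j ≠ (T.edge j).2).card * (Equiv.Perm.sign (T.perm 0) : ℤ) := by
  simp only [treeSign, Nat.succ_pos, ↓reduceDIte, treeSignAt]
  exact congrArg (_ * ·) (dif_pos (T.permFun_bijective 0))

/-- The signed incidence matrix of a directed tree: row `j + 1` is the head of the edge `j'` minus
its tail. Row `0` marks the vertex `0`, the root used by `treeSign`, to make the matrix square. -/
def incidenceMatrix : Matrix (Fin (n + 1)) (Fin (n + 1)) ℤ :=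
  Matrix.of <| Fin.cons (Pi.single 0 1)
    fun j : Fin n => Pi.single (T.edge j).2 1 - Pi.single (T.edge j).1 1

lemma incidenceMatrix_zero : T.incidenceMatrix 0 = Pi.single 0 1 := rfl

lemma incidenceMatrix_succ (j : Fin n) :
    T.incidenceMatrix j.succ = Pi.single (T.edge j).2 1 - Pi.single (T.edge j).1 1 := rfl

lemma incidenceMatrix_succ_eq_smul (j : Fin n) :
    T.incidenceMatrix j.succ = (if stdHead T r j ≠ (T.edge j).2 then -1 else 1 : ℤ) •
      (Pi.single (stdHead T r j) 1 - Pi.single (stdTail T r j) 1) := by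
  have hloop := T.loopless j
  rw [incidenceMatrix_succ]
  unfold stdHead stdTail
  split_ifs <;> simp_all

lemma incidenceMatrix_zero_apply_perm : T.incidenceMatrix 0 (T.perm 0 0) = 1 := by
  rw [perm_zero, incidenceMatrix_zero, Pi.single_eq_same]

lemma incidenceMatrix_succ_apply_perm (j : Fin n) :
    T.incidenceMatrix j.succ (T.perm 0 j.succ) =
      if stdHead T 0 j ≠ (T.edge j).2 then -1 else 1 := by
  have hne : stdHead T 0 j ≠ stdTail T 0 j := fun h =>
    (T.dist_stdTail_lt_dist_stdHead 0 j).ne (by rw [h])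
  rw [T.incidenceMatrix_succ_eq_smul 0 j, perm_succ]
  simp [hne]

lemma incidenceMatrix_apply_eq_zero {i v : Fin (n + 1)} (hv : v ≠ T.perm 0 i)
    (hle : (treeRel T.edge).dist 0 (T.perm 0 i) ≤ (treeRel T.edge).dist 0 v) :
    T.incidenceMatrix i v = 0 := by
  cases i using Fin.cases with
  | zero => exact Pi.single_eq_of_ne hv _
  | succ j =>
    rw [perm_succ] at hv hle
    have htail : v ≠ stdTail T 0 j := by
      rintro rfl
      exact hle.not_gt (T.dist_stdTail_lt_dist_stdHead 0 j)
    simp [T.incidenceMatrix_succ_eq_smul 0 j, hv, htail]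

lemma sign_perm_mul_det_incidenceMatrix :
    (Equiv.Perm.sign (T.perm 0) : ℤ) * T.incidenceMatrix.det =
      (-1) ^ (Finset.univ.filter fun j : Fin n => stdHead T 0 j ≠ (T.edge j).2).card := by
  rw [← Int.cast_id (n := Equiv.Perm.sign (T.perm 0)), ← Matrix.det_permute',
    det_eq_prod_diag_of_forall_le (T.incidenceMatrix.submatrix id (T.perm 0))
      fun i => (treeRel T.edge).dist 0 (T.perm 0 i)]
  · simp only [Fin.prod_univ_succ, Matrix.submatrix_apply, id_eq, one_mul,
      incidenceMatrix_zero_apply_perm, incidenceMatrix_succ_apply_perm, prod_ite_neg_one]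
  · exact fun i i' hne hle => T.incidenceMatrix_apply_eq_zero ((T.perm 0).injective.ne hne.symm) hle

theorem treeSign_mul_det_incidenceMatrix : treeSign T * T.incidenceMatrix.det = 1 := by
  rw [treeSign_eq, mul_assoc, sign_perm_mul_det_incidenceMatrix, ← mul_pow]
  simp

end NTree

section Layer

/-- The bijection between labels `k` and the shifted labels `v ↦ k v + v + 1`, in which
admissibility and inversions are expressed. -/
def shiftLabels (n : ℕ) : (Fin n → ℤ) ≃ (Fin n → ℤ) where
  toFun k v := k v + v.1 + 1
  invFun x v := x v - v.1 - 1
  left_inv k := by ext; ring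
  right_inv x := by ext; ring

lemma shiftLabels_apply {n : ℕ} (k : Fin n → ℤ) (v : Fin n) :
    shiftLabels n k v = k v + v.1 + 1 := rfl

variable {n : ℕ} (T : NTree (n + 1))

/-- The shifted labels allowed on an edge whose endpoints carry the shifted labels `x`. -/
noncomputable def NTree.edgeRange (x : Fin (n + 1) → ℤ) (j : Fin n) : Finset ℤ :=
  Finset.Ico (min (x (T.edge j).1) (x (T.edge j).2)) (max (x (T.edge j).1) (x (T.edge j).2))

/-- The finite set of labelings admissible for `(T, k)`. -/
noncomputable def NTree.admissibleLabels (k : Fin (n + 1) → ℤ) : Finset (Fin n → ℤ) :=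
  (Fintype.piFinset (T.edgeRange (shiftLabels (n + 1) k))).map (shiftLabels n).symm.toEmbedding

lemma NTree.mem_admissibleLabels {k : Fin (n + 1) → ℤ} {l : Fin n → ℤ} :
    l ∈ T.admissibleLabels k ↔ Admissible T k l := by
  rw [admissibleLabels, Finset.mem_map_equiv, Fintype.mem_piFinset]
  refine forall_congr' fun j => ?_
  simp only [edgeRange, Finset.mem_Ico, Equiv.symm_symm, shiftLabels_apply]
  split_ifs with h
  · rw [min_eq_left h.le, max_eq_right h.le]
  · rw [min_eq_right (not_lt.1 h), max_eq_left (not_lt.1 h)]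

lemma neg_one_pow_invCount (k : Fin (n + 1) → ℤ) :
    (-1 : ℤ) ^ invCount T k = ∏ j : Fin n,
      if ¬ shiftLabels (n + 1) k (T.edge j).1 < shiftLabels (n + 1) k (T.edge j).2
        then -1 else 1 :=
  (prod_ite_neg_one _ _).symm

/-- The product of the incidence rows of the edges with `binomialMatrix x`, without its zero
first column. -/
def NTree.binomialDiffMatrix (x : Fin (n + 1) → ℤ) : Matrix (Fin n) (Fin n) ℤ :=
  Matrix.of fun j i =>
    Ring.choose (x (T.edge j).2) (i.1 + 1) - Ring.choose (x (T.edge j).1) (i.1 + 1)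

lemma neg_one_pow_invCount_mul_sum_det (k : Fin (n + 1) → ℤ) :
    (-1) ^ invCount T k *
        ∑ l ∈ T.admissibleLabels k, (binomialMatrix (shiftLabels n l)).det =
      (T.binomialDiffMatrix (shiftLabels (n + 1) k)).det := by
  have sum_det : ∑ l ∈ T.admissibleLabels k, (binomialMatrix (shiftLabels n l)).det =
      (Matrix.of fun j i : Fin n =>
        ∑ y ∈ T.edgeRange (shiftLabels (n + 1) k) j, Ring.choose y i.1).det := by
    rw [det_of_sum_rows, NTree.admissibleLabels, Finset.sum_map]
    simp [binomialMatrix]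
  rw [sum_det, neg_one_pow_invCount, ← Matrix.det_mul_column]
  congr 1
  ext j i
  exact sign_mul_sum_Ico_min_max_choose _ _ _

lemma NTree.det_incidenceMatrix_mul_det_binomialMatrix (x : Fin (n + 1) → ℤ) :
    T.incidenceMatrix.det * (binomialMatrix x).det = (T.binomialDiffMatrix x).det := by
  have mul_zero_apply (i : Fin (n + 1)) :
      (T.incidenceMatrix * binomialMatrix x) 0 i = Ring.choose (x 0) i.1 := by
    simp [Matrix.mul_apply, incidenceMatrix_zero, Pi.single_apply, binomialMatrix]
  have mul_succ_apply (j : Fin n) (i : Fin (n + 1)) :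
      (T.incidenceMatrix * binomialMatrix x) j.succ i =
        Ring.choose (x (T.edge j).2) i.1 - Ring.choose (x (T.edge j).1) i.1 := by
    simp [Matrix.mul_apply, incidenceMatrix_succ, Pi.single_apply, sub_mul,
      Finset.sum_sub_distrib, binomialMatrix]
  rw [← Matrix.det_mul, det_of_column_zero_eq_zero _ (by simp [mul_succ_apply]), mul_zero_apply]
  simp only [Fin.val_zero, Ring.choose_zero_right, one_mul]
  congr 1
  ext j i
  exact mul_succ_apply j i.succ

theorem treeSign_mul_sum_det_eq (k : Fin (n + 1) → ℤ) :
    treeSign T * (-1) ^ invCount T k *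
        ∑ l ∈ T.admissibleLabels k, (binomialMatrix (shiftLabels n l)).det =
      (binomialMatrix (shiftLabels (n + 1) k)).det := by
  rw [mul_assoc, neg_one_pow_invCount_mul_sum_det, ← T.det_incidenceMatrix_mul_det_binomialMatrix,
    ← mul_assoc, T.treeSign_mul_det_incidenceMatrix, one_mul]

end Layer

section Recursion

/-- Triangular arrays of integers: the `i`-th row labels the vertices of an `(i + 1)`-tree. -/
abbrev LabelArray (n : ℕ) := ∀ i : Fin n, Fin (i.1 + 1) → ℤ

namespace LabelArray

variable {n : ℕ}

/-- The last row of an array, labeling the vertices of the largest tree. -/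
def topRow (L : LabelArray n) : Fin n → ℤ :=
  fun j => L ⟨n - 1, by have := j.isLt; lia⟩ ⟨j.1, by have := j.isLt; lia⟩

/-- The row below row `i`, labeling the edges of an `(i + 1)`-tree. At `i = 0` it has no entries. -/
def rowBelow (L : LabelArray n) (i : Fin n) : Fin (i.1 + 1 - 1) → ℤ :=
  fun j => L ⟨i.1 - 1, by lia⟩ ⟨j.1, by have := j.isLt; lia⟩

/-- The array obtained from `L` by adding the row `k` on top. -/
def snoc (k : Fin (n + 1) → ℤ) (L : LabelArray n) : LabelArray (n + 1) :=
  Fin.snoc (α := fun i : Fin (n + 1) => Fin (i.1 + 1) → ℤ) L k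

lemma snoc_last (k : Fin (n + 1) → ℤ) (L : LabelArray n) : snoc k L (Fin.last n) = k :=
  Fin.snoc_last (α := fun i : Fin (n + 1) => Fin (i.1 + 1) → ℤ) k L

lemma snoc_castSucc (k : Fin (n + 1) → ℤ) (L : LabelArray n) (i : Fin n) :
    snoc k L i.castSucc = L i :=
  Fin.snoc_castSucc (α := fun i : Fin (n + 1) => Fin (i.1 + 1) → ℤ) k L i

lemma snoc_injective (k : Fin (n + 1) → ℤ) : Function.Injective (snoc k) := fun L L' h => by
  ext1 i
  rw [← snoc_castSucc k L, h, snoc_castSucc]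

lemma topRow_snoc (k : Fin (n + 1) → ℤ) (L : LabelArray n) : (snoc k L).topRow = k :=
  snoc_last k L

lemma snoc_topRow (L : LabelArray (n + 1)) : snoc L.topRow (fun i => L i.castSucc) = L :=
  Fin.snoc_init_self (α := fun i : Fin (n + 1) => Fin (i.1 + 1) → ℤ) L

lemma rowBelow_snoc_castSucc (k : Fin (n + 1) → ℤ) (L : LabelArray n) (i : Fin n) :
    (snoc k L).rowBelow i.castSucc = L.rowBelow i :=
  funext fun _ => congrFun (snoc_castSucc k L ⟨i.1 - 1, _⟩) _

lemma rowBelow_snoc_last (k : Fin (n + 1) → ℤ) (L : LabelArray n) :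
    (snoc k L).rowBelow (Fin.last n) = L.topRow :=
  funext fun (_ : Fin n) => congrFun (snoc_castSucc k L ⟨n - 1, _⟩) _

end LabelArray

/-- The tree sequence without its largest tree. -/
def TreeSeq.init {n : ℕ} (𝒯 : TreeSeq (n + 1)) : TreeSeq n := fun i => 𝒯 i.castSucc

/-- The largest tree of a tree sequence. -/
def TreeSeq.last {n : ℕ} (𝒯 : TreeSeq (n + 1)) : NTree (n + 1) := 𝒯 (Fin.last n)

lemma isGTTreeSeq_iff {n : ℕ} {𝒯 : TreeSeq n} {k : Fin n → ℤ} {L : LabelArray n} :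
    IsGTTreeSeq 𝒯 k L ↔
      L.topRow = k ∧ ∀ i : Fin n, 0 < i.1 → Admissible (𝒯 i) (L i) (L.rowBelow i) := by
  refine and_congr_left fun _ => ⟨fun h => ?_, ?_⟩
  · ext j
    exact h _ (Nat.sub_add_cancel j.pos) _
  · rintro rfl ⟨i, hi⟩ h j
    dsimp only at h
    subst h
    rfl

variable {n : ℕ} (𝒯 : TreeSeq (n + 1)) (k : Fin (n + 1) → ℤ)

lemma isGTTreeSeq_snoc_iff (L : LabelArray n) :
    IsGTTreeSeq 𝒯 k (LabelArray.snoc k L) ↔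
      Admissible 𝒯.last k L.topRow ∧ IsGTTreeSeq 𝒯.init L.topRow L := by
  simp only [isGTTreeSeq_iff, LabelArray.topRow_snoc, true_and, Fin.forall_fin_succ',
    LabelArray.rowBelow_snoc_castSucc, LabelArray.rowBelow_snoc_last, LabelArray.snoc_castSucc,
    LabelArray.snoc_last]
  rw [and_comm]
  refine and_congr_left fun _ => ⟨fun h => ?_, fun h _ => h⟩
  rcases n.eq_zero_or_pos with rfl | hn
  · exact fun j => j.elim0
  · exact h hn

lemma setOf_isGTTreeSeq_succ :
    {L | IsGTTreeSeq 𝒯 k L} = ⋃ l ∈ (𝒯.last.admissibleLabels k : Set (Fin n → ℤ)),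
      LabelArray.snoc k '' {L | IsGTTreeSeq 𝒯.init l L} := by
  ext L
  simp only [Set.mem_iUnion, Set.mem_image, Set.mem_ofPred_eq, Finset.mem_coe, exists_prop]
  constructor
  · intro hL
    obtain rfl := (isGTTreeSeq_iff.1 hL).1
    rw [← LabelArray.snoc_topRow L, LabelArray.topRow_snoc, isGTTreeSeq_snoc_iff,
      ← NTree.mem_admissibleLabels] at hL
    exact ⟨_, hL.1, _, hL.2, LabelArray.snoc_topRow L⟩
  · rintro ⟨l, hl, L, hL, rfl⟩
    obtain rfl := (isGTTreeSeq_iff.1 hL).1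
    exact (isGTTreeSeq_snoc_iff 𝒯 k L).2 ⟨(NTree.mem_admissibleLabels _).1 hl, hL⟩

lemma pairwiseDisjoint_snoc_image_isGTTreeSeq (s : Set (Fin n → ℤ)) :
    s.PairwiseDisjoint fun l => LabelArray.snoc k '' {L | IsGTTreeSeq 𝒯.init l L} := by
  intro l _ l' _ hne
  refine (Set.disjoint_image_iff (LabelArray.snoc_injective k)).2 (Set.disjoint_left.2 ?_)
  exact fun L hL hL' => hne ((isGTTreeSeq_iff.1 hL).1.symm.trans (isGTTreeSeq_iff.1 hL').1)

lemma finite_setOf_isGTTreeSeq {n : ℕ} (𝒯 : TreeSeq n) (k : Fin n → ℤ) :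
    {L | IsGTTreeSeq 𝒯 k L}.Finite := by
  induction n with
  | zero => exact Set.toFinite _
  | succ n ih =>
    rw [setOf_isGTTreeSeq_succ]
    exact (Finset.finite_toSet _).biUnion fun l _ => (ih 𝒯.init l).image _

lemma gtSign_snoc (L : LabelArray n) :
    gtSign 𝒯 (LabelArray.snoc k L) =
      treeSign 𝒯.last * (-1) ^ invCount 𝒯.last k * gtSign 𝒯.init L := by
  simp only [gtSign, Fin.sum_univ_castSucc, Fin.prod_univ_castSucc, LabelArray.snoc_castSucc,
    LabelArray.snoc_last, pow_add, TreeSeq.init, TreeSeq.last]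
  ring

lemma Lsum_zero (𝒯 : TreeSeq 0) (k : Fin 0 → ℤ) : Lsum 𝒯 k = 1 := by
  have univ_eq : {L : LabelArray 0 | IsGTTreeSeq 𝒯 k L} = {fun i => i.elim0} :=
    Set.eq_singleton_iff_unique_mem.2
      ⟨⟨fun i => i.elim0, fun i => i.elim0⟩, fun _ _ => Subsingleton.elim _ _⟩
  rw [Lsum, univ_eq, finsum_mem_singleton]
  simp [gtSign]

theorem Lsum_succ :
    Lsum 𝒯 k = treeSign 𝒯.last * (-1) ^ invCount 𝒯.last k *
      ∑ l ∈ 𝒯.last.admissibleLabels k, Lsum (n := n) 𝒯.init l := by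
  have finite_image (l : Fin n → ℤ) :
      (LabelArray.snoc k '' {L | IsGTTreeSeq 𝒯.init l L}).Finite :=
    (finite_setOf_isGTTreeSeq 𝒯.init l).image _
  rw [Lsum, setOf_isGTTreeSeq_succ, finsum_mem_biUnion
    (pairwiseDisjoint_snoc_image_isGTTreeSeq 𝒯 k _) (Finset.finite_toSet _)
    fun l _ => finite_image l, finsum_mem_coe_finset, Finset.mul_sum]
  refine Finset.sum_congr rfl fun l _ => ?_
  rw [finsum_mem_image (LabelArray.snoc_injective k).injOn, Lsum,
    mul_finsum_mem' _ _ (finite_setOf_isGTTreeSeq 𝒯.init l)]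
  simp only [gtSign_snoc]

end Recursion

theorem Lsum_eq_det_binomialMatrix {n : ℕ} (𝒯 : TreeSeq n) (k : Fin n → ℤ) :
    Lsum 𝒯 k = (binomialMatrix (shiftLabels n k)).det := by
  induction n with
  | zero => rw [Lsum_zero, Matrix.det_fin_zero]
  | succ n ih =>
    rw [Lsum_succ, ← treeSign_mul_sum_det_eq 𝒯.last]
    simp only [ih]

/-- The signed enumeration of Gelfand-Tsetlin tree sequences associated with a fixed
tree sequence `𝒯` of order `n` and shifted labeling `k` satisfies
`L_n(𝒯,k) · ∏_{1 ≤ i < j ≤ n} (j - i) = ∏_{1 ≤ i < j ≤ n} (k_j - k_i + j - i)`. -/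
theorem gt_tree_sequence_signed_enumeration (n : ℕ) (hn : 1 ≤ n)
    (𝒯 : TreeSeq n) (k : Fin n → ℤ) :
    Lsum 𝒯 k * ∏ q : Fin n, ∏ p ∈ Finset.Iio q, ((q.1 : ℤ) - (p.1 : ℤ)) =
      ∏ q : Fin n, ∏ p ∈ Finset.Iio q, (k q - k p + ((q.1 : ℤ) - (p.1 : ℤ))) := by
  rw [Lsum_eq_det_binomialMatrix, det_binomialMatrix_mul_prod_sub]
  refine Finset.prod_congr rfl fun q _ => Finset.prod_congr rfl fun p _ => ?_
  simp only [shiftLabels_apply]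
  ring
end

section
/- Let n ≥ 1 and let k = (k_1,...,k_n) ∈ ℤ^n be weakly increasing (k_1 ≤ k_2 ≤ ... ≤ k_n). Then the number of Gelfand-Tsetlin patterns with n rows and bottom row a_{n,j} = k_j (j = 1,...,n), multiplied by ∏_{1 ≤ i < j ≤ n} (j − i), equals ∏_{1 ≤ i < j ≤ n} (k_j − k_i + j − i). -/
/-- A Gelfand-Tsetlin pattern with `n` rows: a triangular array
`(a_{i,j})_{1 ≤ j ≤ i ≤ n}` of integers with `a_{i+1,j} ≤ a_{i,j} ≤ a_{i+1,j+1}`. -/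
def IsGT {n : ℕ} (a : ∀ i : Fin n, Fin (i.1 + 1) → ℤ) : Prop :=
  ∀ i : Fin n, ∀ hi : i.1 + 1 < n, ∀ j : Fin (i.1 + 1),
    a ⟨i.1 + 1, hi⟩ ⟨j.1, by have := j.isLt; show j.1 < i.1 + 1 + 1; omega⟩ ≤ a i j ∧
      a i j ≤ a ⟨i.1 + 1, hi⟩ ⟨j.1 + 1, by have := j.isLt; show j.1 + 1 < i.1 + 1 + 1; omega⟩

/-- The bottom row (row `n`) of a triangular array equals `k`. -/
def BottomRow {n : ℕ} (a : ∀ i : Fin n, Fin (i.1 + 1) → ℤ) (k : Fin n → ℤ) : Prop :=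
  ∀ i : Fin n, i.1 + 1 = n → ∀ j : Fin (i.1 + 1),
    a i j = k ⟨j.1, by have := j.isLt; omega⟩

/-!
Put `x_i = k_i + i`, so that both products are Vandermonde determinants `V`. The bottom row `k` of
a pattern restricts the row `l` above it only through `k_i ≤ l_i ≤ k_{i+1}`, that is, the shifted
row `y_i = l_i + i` ranges over the box `∏ [x_i, x_{i+1})`. By induction on the number of rows
everything reduces to the discrete integral `n! * ∑_y V(y) = V(x)` over that box. There, `V` is
also the determinant of falling factorials `y_i (y_i - 1) ⋯ (y_i - j + 1)`: summing over the box
row by row and telescoping turns `n! * ∑_y V(y)` into the determinant of the consecutive row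
differences of the matrix of falling factorials of `x`, and this is `V(x)` because the first column
of that matrix consists of ones.
-/

open Finset Matrix

section FallingFactorial

open Polynomial

lemma descPochhammer_eval_add_one_sub_eval {R : Type*} [CommRing R] (m : ℕ) (r : R) :
    (descPochhammer R (m + 1)).eval (r + 1) - (descPochhammer R (m + 1)).eval r =
      (m + 1) * (descPochhammer R m).eval r := by
  have h := congrArg (eval (r + 1)) (descPochhammer_succ_comp_X_sub_one R m)
  simp only [eval_comp, eval_sub, eval_X, eval_one, add_sub_cancel_right, smul_eq_mul, eval_mul,
    eval_add, eval_natCast] at h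
  rw [h, sub_sub_cancel]

lemma sum_Ico_int_add_one_sub {G : Type*} [AddCommGroup G] (f : ℤ → G) {a b : ℤ} (hab : a ≤ b) :
    ∑ c ∈ Ico a b, (f (c + 1) - f c) = f b - f a := by
  induction b, hab using Int.leInduction with
  | base => simp
  | succ b hab ih =>
    rw [← insert_Ico_right_eq_Ico_add_one hab, sum_insert right_notMem_Ico, ih, sub_add_sub_cancel]

lemma succ_mul_sum_Ico_descPochhammer_eval (m : ℕ) {a b : ℤ} (hab : a ≤ b) :
    (m + 1) * ∑ c ∈ Ico a b, (descPochhammer ℤ m).eval c =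
      (descPochhammer ℤ (m + 1)).eval b - (descPochhammer ℤ (m + 1)).eval a := by
  simp_rw [mul_sum, ← descPochhammer_eval_add_one_sub_eval]
  exact sum_Ico_int_add_one_sub (fun c ↦ (descPochhammer ℤ (m + 1)).eval c) hab

end FallingFactorial

section Determinant

variable {R : Type*} [CommRing R]

lemma sum_piFinset_det {ι α : Type*} [Fintype ι] [DecidableEq ι] (s : ι → Finset α)
    (f : ι → α → ι → R) :
    ∑ y ∈ Fintype.piFinset s, (of fun i j ↦ f i (y i) j).det =
      (of fun i j ↦ ∑ c ∈ s i, f i c j).det := by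
  have h := (detRowAlternating (R := R) (n := ι)).toMultilinearMap.map_sum_finset f s
  refine h.symm.trans (congrArg det ?_)
  ext i j
  simp

lemma det_eq_det_sub_of_col_zero_eq_one {n : ℕ} (A : Matrix (Fin (n + 1)) (Fin (n + 1)) R)
    (hA : ∀ i, A i 0 = 1) :
    A.det = (of fun i j : Fin n ↦ A i.succ j.succ - A i.castSucc j.succ).det := by
  let B : Matrix (Fin (n + 1)) (Fin (n + 1)) R :=
    of fun i j ↦ Fin.cases (A 0 j) (fun i' ↦ A i'.succ j - A i'.castSucc j) i
  have hAB : A.det = B.det :=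
    det_eq_of_forall_row_eq_smul_add_pred (fun _ ↦ 1) (by simp [B]) (by simp [B])
  have hB_succ (i : Fin n) : B i.succ 0 = 0 := by simp [B, hA]
  have hB_zero : B 0 0 = 1 := by simp [B, hA]
  simp only [hAB, det_succ_column_zero B, Fin.sum_univ_succ, hB_zero, hB_succ, Fin.val_zero,
    pow_zero, mul_one, one_mul, mul_zero, zero_mul, sum_const_zero, add_zero]
  rfl

lemma det_vandermonde_eq_prod_Iio {n : ℕ} (v : Fin n → R) :
    (vandermonde v).det = ∏ j, ∏ i ∈ Iio j, (v j - v i) := by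
  rw [det_vandermonde]
  exact prod_comm' (by simp)

lemma factorial_mul_det_vandermonde_id (n : ℕ) :
    (n.factorial : R) * (vandermonde fun i : Fin n ↦ (i : R)).det =
      (vandermonde fun i : Fin (n + 1) ↦ (i : R)).det := by
  cases n with
  | zero => simp
  | succ n => simp [det_vandermonde_id_eq_superFactorial, Nat.superFactorial_succ]

end Determinant

lemma det_vandermonde_eq_det_descPochhammer {n : ℕ} (x : Fin n → ℤ) :
    (vandermonde x).det = (of fun i j : Fin n ↦ (descPochhammer ℤ j).eval (x i)).det :=
  det_eval_matrixOfPolynomials_eq_det_vandermonde x (fun j ↦ descPochhammer ℤ j)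
    (fun j ↦ descPochhammer_natDegree ℤ j) (fun j ↦ monic_descPochhammer ℤ j)

lemma factorial_mul_sum_piFinset_Ico_det_vandermonde {n : ℕ} {x : Fin (n + 1) → ℤ}
    (hx : Monotone x) :
    n.factorial * ∑ y ∈ Fintype.piFinset fun i : Fin n ↦ Ico (x i.castSucc) (x i.succ),
      (vandermonde y).det = (vandermonde x).det := by
  have hfact : (n.factorial : ℤ) = ∏ j : Fin n, ((j : ℤ) + 1) := by
    rw [Fin.prod_univ_eq_prod_range (fun j ↦ (j : ℤ) + 1), ← prod_range_add_one_eq_factorial]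
    push_cast
    rfl
  simp_rw [det_vandermonde_eq_det_descPochhammer]
  rw [sum_piFinset_det _ fun _ c (j : Fin n) ↦ (descPochhammer ℤ j).eval c, hfact, ← det_mul_row,
    det_eq_det_sub_of_col_zero_eq_one _ (by simp)]
  congr 1
  ext i j
  simpa using succ_mul_sum_Ico_descPochhammer_eval j (hx i.castSucc_le_succ)

/-- The rows that may stand directly above the row `k` in a Gelfand-Tsetlin pattern. -/
noncomputable def interlacingRows {n : ℕ} (k : Fin (n + 1) → ℤ) : Finset (Fin n → ℤ) :=
  Fintype.piFinset fun i ↦ Icc (k i.castSucc) (k i.succ)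

section Interlacing

variable {n : ℕ} {k : Fin (n + 1) → ℤ} {l : Fin n → ℤ}

lemma mem_interlacingRows :
    l ∈ interlacingRows k ↔ ∀ i, k i.castSucc ≤ l i ∧ l i ≤ k i.succ := by
  simp [interlacingRows]

lemma monotone_of_mem_interlacingRows (hl : l ∈ interlacingRows k) : Monotone l := by
  rw [mem_interlacingRows] at hl
  cases n with
  | zero => exact Subsingleton.monotone l
  | succ n => exact Fin.monotone_iff_le_succ.2 fun i ↦ (hl i.castSucc).2.trans (hl i.succ).1

lemma sum_interlacingRows_shift {M : Type*} [AddCommMonoid M] (k : Fin (n + 1) → ℤ)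
    (f : (Fin n → ℤ) → M) :
    ∑ l ∈ interlacingRows k, f (fun i ↦ l i + i) =
      ∑ y ∈ Fintype.piFinset fun i : Fin n ↦
        Ico (k i.castSucc + i.castSucc) (k i.succ + i.succ), f y := by
  refine sum_equiv (Equiv.addRight fun i : Fin n ↦ (i : ℤ)) (fun l ↦ ?_) fun l _ ↦ rfl
  simp [mem_interlacingRows, ← add_assoc]

end Interlacing

/-- Triangular arrays `(a_{i,j})_{1 ≤ j ≤ i ≤ n}` of integers; row `i` is stored at index
`i - 1`. -/
abbrev TriangularArray (n : ℕ) : Type := ∀ i : Fin n, Fin (i.1 + 1) → ℤ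

namespace TriangularArray

variable {n : ℕ}

/-- The bottom row of a triangular array, which is empty when there are no rows. -/
def lastRow : {n : ℕ} → TriangularArray n → Fin n → ℤ
  | 0, _ => Fin.elim0
  | n + 1, a => a (Fin.last n)

/-- The triangular array obtained by placing the row `k` below `b`. -/
def snoc (b : TriangularArray n) (k : Fin (n + 1) → ℤ) : TriangularArray (n + 1) :=
  Fin.snoc (α := fun i : Fin (n + 1) ↦ Fin (i.1 + 1) → ℤ) b k

/-- The triangular array obtained by deleting the bottom row of `a`. -/
def dropLastRow (a : TriangularArray (n + 1)) : TriangularArray n :=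
  fun i ↦ a i.castSucc

lemma snoc_castSucc (b : TriangularArray n) (k : Fin (n + 1) → ℤ) (i : Fin n) :
    b.snoc k i.castSucc = b i :=
  Fin.snoc_castSucc ..

lemma snoc_last (b : TriangularArray n) (k : Fin (n + 1) → ℤ) : b.snoc k (Fin.last n) = k :=
  Fin.snoc_last ..

lemma dropLastRow_snoc (b : TriangularArray n) (k : Fin (n + 1) → ℤ) : (b.snoc k).dropLastRow = b :=
  Fin.init_snoc ..

lemma snoc_dropLastRow_lastRow (a : TriangularArray (n + 1)) :
    a.dropLastRow.snoc a.lastRow = a :=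
  Fin.snoc_init_self a

end TriangularArray

/-- Gelfand-Tsetlin patterns with bottom row `k`. -/
abbrev GTPattern {n : ℕ} (k : Fin n → ℤ) : Type :=
  {a : TriangularArray n // IsGT a ∧ BottomRow a k}

section Pattern

variable {n : ℕ}

lemma bottomRow_iff_lastRow_eq {a : TriangularArray n} {k : Fin n → ℤ} :
    BottomRow a k ↔ a.lastRow = k := by
  cases n with
  | zero => exact iff_of_true (fun i ↦ i.elim0) (Subsingleton.elim _ _)
  | succ n =>
    refine ⟨fun h ↦ funext (h (Fin.last n) rfl), ?_⟩
    rintro rfl i hi j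
    obtain rfl : i = Fin.last n := Fin.ext (Nat.succ_injective hi)
    rfl

lemma isGT_succ_iff {a : TriangularArray (n + 1)} :
    IsGT a ↔ ∀ i : Fin n, a i.castSucc ∈ interlacingRows (a i.succ) := by
  simp only [mem_interlacingRows]
  exact ⟨fun h i ↦ h i.castSucc (Nat.succ_lt_succ i.isLt),
    fun h i hi ↦ h ⟨i, Nat.lt_of_succ_lt_succ hi⟩⟩

lemma isGT_snoc_iff {b : TriangularArray n} {k : Fin (n + 1) → ℤ} :
    IsGT (b.snoc k) ↔ IsGT b ∧ b.lastRow ∈ interlacingRows k := by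
  rw [isGT_succ_iff]
  cases n with
  | zero =>
    exact iff_of_true (fun i ↦ i.elim0) ⟨fun i ↦ i.elim0, mem_interlacingRows.2 fun i ↦ i.elim0⟩
  | succ n =>
    have hsucc (i : Fin n) : b.snoc k i.castSucc.succ = b i.succ := b.snoc_castSucc k i.succ
    have hlast : b.snoc k (Fin.last n).succ = k := b.snoc_last k
    rw [isGT_succ_iff, Fin.forall_fin_succ']
    simp only [TriangularArray.snoc_castSucc, hsucc, hlast]
    rfl

/-- Deleting the bottom row `k` of a pattern leaves a pattern whose bottom row interlaces `k`. -/
def GTPattern.succEquiv (k : Fin (n + 1) → ℤ) :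
    GTPattern k ≃ Σ l : interlacingRows k, GTPattern l.1 where
  toFun a :=
    have ha : IsGT a.1.dropLastRow ∧ a.1.dropLastRow.lastRow ∈ interlacingRows k := by
      obtain ⟨a, ha, hak⟩ := a
      obtain rfl := bottomRow_iff_lastRow_eq.1 hak
      rwa [← isGT_snoc_iff, a.snoc_dropLastRow_lastRow]
    ⟨⟨a.1.dropLastRow.lastRow, ha.2⟩, a.1.dropLastRow, ha.1, bottomRow_iff_lastRow_eq.2 rfl⟩
  invFun s := ⟨s.2.1.snoc k, by
    obtain ⟨⟨l, hl⟩, b, hb, hbl⟩ := s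
    obtain rfl := bottomRow_iff_lastRow_eq.1 hbl
    exact ⟨isGT_snoc_iff.2 ⟨hb, hl⟩, bottomRow_iff_lastRow_eq.2 (b.snoc_last k)⟩⟩
  left_inv := by
    rintro ⟨a, ha, hak⟩
    obtain rfl := bottomRow_iff_lastRow_eq.1 hak
    exact Subtype.ext a.snoc_dropLastRow_lastRow
  right_inv := by
    rintro ⟨⟨l, hl⟩, b, hb, hbl⟩
    obtain rfl := bottomRow_iff_lastRow_eq.1 hbl
    have hdrop : (b.snoc k).dropLastRow = b := b.dropLastRow_snoc k
    exact Sigma.subtype_ext (Subtype.ext (congrArg TriangularArray.lastRow hdrop)) hdrop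

instance GTPattern.finite (k : Fin n → ℤ) : Finite (GTPattern k) := by
  induction n with
  | zero => infer_instance
  | succ n ih => exact .of_equiv _ (GTPattern.succEquiv k).symm

lemma card_gtPattern_zero (k : Fin 0 → ℤ) : Nat.card (GTPattern k) = 1 := by
  have : Nonempty (GTPattern k) := ⟨fun i ↦ i.elim0, fun i ↦ i.elim0, fun i ↦ i.elim0⟩
  exact Nat.card_eq_one_iff_unique.2 ⟨inferInstance, this⟩

lemma card_gtPattern_succ (k : Fin (n + 1) → ℤ) :
    Nat.card (GTPattern k) = ∑ l ∈ interlacingRows k, Nat.card (GTPattern l) := by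
  rw [Nat.card_congr (GTPattern.succEquiv k), Nat.card_sigma,
    sum_coe_sort (interlacingRows k) fun l ↦ Nat.card (GTPattern l)]

end Pattern

theorem gt_pattern_enumeration_general {n : ℕ} (k : Fin n → ℤ)
    (hk : Monotone fun i ↦ k i + (i : ℤ)) :
    Nat.card (GTPattern k) * (vandermonde fun i : Fin n ↦ (i : ℤ)).det =
      (vandermonde fun i ↦ k i + (i : ℤ)).det := by
  induction n with
  | zero => simp [card_gtPattern_zero]
  | succ n ih =>
    have hrow : ∀ l ∈ interlacingRows k,
        Nat.card (GTPattern l) * (vandermonde fun i : Fin n ↦ (i : ℤ)).det =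
          (vandermonde fun i ↦ l i + (i : ℤ)).det := fun l hl ↦
      ih l ((monotone_of_mem_interlacingRows hl).add fun i j hij ↦ by simpa using hij)
    rw [card_gtPattern_succ, ← factorial_mul_det_vandermonde_id, mul_left_comm, Nat.cast_sum,
      sum_mul, sum_congr rfl hrow, sum_interlacingRows_shift k fun y ↦ (vandermonde y).det,
      factorial_mul_sum_piFinset_Ico_det_vandermonde hk]

/-- For a weakly increasing bottom row `k`, the number of Gelfand-Tsetlin patterns with
bottom row `k`, multiplied by `∏_{1 ≤ i < j ≤ n} (j - i)`, equals
`∏_{1 ≤ i < j ≤ n} (k_j - k_i + j - i)`. -/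
theorem gt_pattern_enumeration (n : ℕ) (hn : 1 ≤ n) (k : Fin n → ℤ)
    (hk : ∀ p q : Fin n, p ≤ q → k p ≤ k q) :
    (Nat.card {a : ∀ i : Fin n, Fin (i.1 + 1) → ℤ // IsGT a ∧ BottomRow a k} : ℤ) *
        ∏ q : Fin n, ∏ p ∈ Finset.Iio q, ((q.1 : ℤ) - (p.1 : ℤ)) =
      ∏ q : Fin n, ∏ p ∈ Finset.Iio q, (k q - k p + ((q.1 : ℤ) - (p.1 : ℤ))) := by
  have hshift : Monotone fun i ↦ k i + (i : ℤ) := fun p q h ↦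
    add_le_add (hk p q h) (by exact_mod_cast h)
  simpa only [det_vandermonde_eq_prod_Iio, add_sub_add_comm] using
    gt_pattern_enumeration_general k hshift
end

section
/- Let n ≥ 1 and let α : ℤ^n → ℚ be the restriction of a polynomial in n variables. Suppose that (i) for every i ∈ {1,...,n−1} and every k ∈ ℤ^n, g(k) + g(k') = 0, where g = V_i α is defined by (V_i α)(k) = α(k − e_i) + α(k + e_{i+1}) − α(k − e_i + e_{i+1}) and k' is obtained from k by replacing (k_i, k_{i+1}) with (k_{i+1} + 1, k_i − 1); and (ii) e_ρ(Δ_1,...,Δ_n) α = 0 for all ρ with 1 ≤ ρ ≤ n. Then for all (k_1,...,k_n) ∈ ℤ^n, α(k_1, k_2, ..., k_n) = (−1)^{n−1} · α(k_2, k_3, ..., k_n, k_1 − n). -/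
/-- `kup k i t` shifts the `i`-th coordinate of `k` by `t`. -/
def kup {n : ℕ} (k : Fin n → ℤ) (i : Fin n) (t : ℤ) : Fin n → ℤ :=
  fun j => if j = i then k j + t else k j

/-- The forward difference operator `Δ_i = E_i - id` on functions `ℤ^n → ℚ`. -/
def DeltaOp (n : ℕ) (i : Fin n) : ((Fin n → ℤ) → ℚ) → ((Fin n → ℤ) → ℚ) :=
  fun A k => A (kup k i 1) - A k

/-- The backward difference operator `δ_i = id - E_i⁻¹` on functions `ℤ^n → ℚ`. -/
def deltaOp (n : ℕ) (i : Fin n) : ((Fin n → ℤ) → ℚ) → ((Fin n → ℤ) → ℚ) :=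
  fun A k => A k - A (kup k i (-1))

/-- The product (composition) of the commuting operators `F i`, `i ∈ S`. -/
noncomputable def opProd (n : ℕ) (F : Fin n → ((Fin n → ℤ) → ℚ) → ((Fin n → ℤ) → ℚ))
    (S : Finset (Fin n)) : ((Fin n → ℤ) → ℚ) → ((Fin n → ℤ) → ℚ) :=
  S.toList.foldr (fun i f => F i ∘ f) id

/-- The `ρ`-th elementary symmetric polynomial `e_ρ(F 1, …, F n)` of the commuting
operators `F i`, applied to a function `ℤ^n → ℚ`. -/
noncomputable def esymmOp (n ρ : ℕ) (F : Fin n → ((Fin n → ℤ) → ℚ) → ((Fin n → ℤ) → ℚ)) :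
    ((Fin n → ℤ) → ℚ) → ((Fin n → ℤ) → ℚ) :=
  fun A k => ∑ S ∈ Finset.powersetCard ρ (Finset.univ : Finset (Fin n)), opProd n F S A k

/-- `(V_i α)(k) = α(k - e_i) + α(k + e_{i+1}) - α(k - e_i + e_{i+1})`, i.e. the operator
`V_{k_i, k_{i+1}} = E_{k_i}⁻¹ + E_{k_{i+1}} - E_{k_i}⁻¹ E_{k_{i+1}}` applied to `α`. -/
def Vop {n : ℕ} (α : (Fin n → ℤ) → ℚ) (i i' : Fin n) (k : Fin n → ℤ) : ℚ :=
  α (kup k i (-1)) + α (kup k i' 1) - α (kup (kup k i (-1)) i' 1)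

/-- `swapShift k i i'` replaces `(k_i, k_{i'})` by `(k_{i'} + 1, k_i - 1)`. -/
def swapShift {n : ℕ} (k : Fin n → ℤ) (i i' : Fin n) : Fin n → ℤ :=
  fun j => if j = i then k i' + 1 else if j = i' then k i - 1 else k j

/-!
Laurent polynomials in the shifts act on functions on `ℤ^n`, and each `V_{x,y} = 1 + δ_x Δ_y`
is one of them. If `e_ρ(Δ) α = 0` for `ρ ≥ 1`, then `∏ j, (r + c Δ_j)` acts on `α` as `r ^ n`, for
any operators `r` and `c`. Taking `r = 1` shows that `∏ j, V_{1,j}`, `∏ j, V_{j,1}` and `∏ j, E_j`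
all fix `α`; taking `r = Δ_i` and `c = -1` shows that `Δ_i ^ n` kills `α`.

Substituting `k_i - i` for `k_i` turns the map `k ↦ k'` into the transposition of two neighbouring
coordinates. Moving the first coordinate to the right one place at a time then yields
`∏ j, V_{j,1} (α ∘ rotation) = (-1)^(n-1) ∏ j, V_{1,j} α`, where the right side is
`(-1)^(n-1) α = (-1)^(n-1) ∏ j, V_{j,1} α`. Finally `∏ j, V_{j,1}` can be cancelled, because
`V_{j,1} = 1 + δ_j Δ_1` is invertible wherever `Δ_1` is nilpotent.
-/

open Finset Equiv

section Fin

variable {N : ℕ} (i : Fin N)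

theorem Iic_succ_eq_insert : Iic i.succ = insert i.succ (Iic i.castSucc) := by
  ext j
  rw [mem_Iic, mem_insert, mem_Iic, le_iff_eq_or_lt, Fin.le_castSucc_iff]

theorem cycleRange_succ_eq_mul_swap :
    i.succ.cycleRange = i.castSucc.cycleRange * swap i.castSucc i.succ := by
  ext1 j
  rw [Perm.mul_apply]
  rcases lt_trichotomy j i.castSucc with h | rfl | h
  · rw [swap_apply_of_ne_of_ne h.ne (h.trans i.castSucc_lt_succ).ne, Fin.cycleRange_of_lt h,
      Fin.cycleRange_of_lt (h.trans i.castSucc_lt_succ)]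
  · rw [swap_apply_left, Fin.cycleRange_of_lt i.castSucc_lt_succ,
      Fin.cycleRange_of_gt i.castSucc_lt_succ, Fin.coeSucc_eq_succ]
  · obtain rfl | h' := (Fin.castSucc_lt_iff_succ_le.1 h).eq_or_lt
    · rw [swap_apply_right, Fin.cycleRange_self, Fin.cycleRange_self]
    · rw [swap_apply_of_ne_of_ne h.ne' h'.ne', Fin.cycleRange_of_gt h, Fin.cycleRange_of_gt h']

end Fin

section Coprime

variable {R M : Type*} [AddCommMonoid M]

theorem eq_zero_of_isCoprime_of_smul_eq_zero [CommSemiring R] [Module R M] {p q : R}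
    (h : IsCoprime p q) {a : M} (hp : p • a = 0) (hq : q • a = 0) : a = 0 := by
  obtain ⟨u, v, huv⟩ := h
  rw [← one_smul R a, ← huv, add_smul, mul_smul, mul_smul, hp, hq, smul_zero, smul_zero, add_zero]

theorem eq_zero_of_prod_one_add_mul_smul_eq_zero [CommRing R] [Module R M] {ι : Type*}
    {s : Finset ι} {c : ι → R} {d : R} {m : ℕ} {a : M} (hd : d ^ m • a = 0)
    (h : (∏ i ∈ s, (1 + c i * d)) • a = 0) : a = 0 := by
  have hcop : IsCoprime (∏ i ∈ s, (1 + c i * d)) (d ^ m) :=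
    .prod_left fun i _ => (isCoprime_one_left.add_mul_right_left (c i)).pow_right
  exact eq_zero_of_isCoprime_of_smul_eq_zero hcop h hd

end Coprime

/-- The elementary symmetric polynomials of positive degree in the ring elements `x i` all
annihilate the module element `a`; degrees above the number of variables need not be mentioned,
since there `e_ρ = 0`. -/
def EsymmAnnihilates {ι R M : Type*} [Fintype ι] [CommSemiring R] [AddCommMonoid M] [Module R M]
    (x : ι → R) (a : M) : Prop :=
  ∀ ρ, 1 ≤ ρ → ρ ≤ Fintype.card ι → (univ.val.map x).esymm ρ • a = 0

namespace EsymmAnnihilates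

variable {ι R M : Type*} [Fintype ι] [AddCommMonoid M]

section CommSemiring

variable [CommSemiring R] [Module R M] {x : ι → R} {a : M}

theorem smul (h : EsymmAnnihilates x a) (p : R) : EsymmAnnihilates x (p • a) := fun ρ h₁ h₂ => by
  rw [smul_comm, h ρ h₁ h₂, smul_zero]

theorem prod_add_mul_smul (h : EsymmAnnihilates x a) (r c : R) :
    (∏ i, (r + c * x i)) • a = r ^ Fintype.card ι • a := by
  have expand : ∏ i, (r + c * x i) = ∑ ρ ∈ range (Fintype.card ι + 1),
      c ^ ρ * r ^ (Fintype.card ι - ρ) * (univ.val.map x).esymm ρ := by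
    classical
    simp_rw [add_comm r, prod_add, sum_powerset, card_univ, esymm_map_val, mul_sum]
    refine sum_congr rfl fun ρ _ => sum_congr rfl fun S hS => ?_
    rw [prod_mul_distrib, prod_const, prod_const, card_sdiff_of_subset (subset_univ S),
      (mem_powersetCard.1 hS).2, card_univ]
    ring
  rw [expand, sum_smul, sum_range_succ', sum_eq_zero, zero_add]
  · simp [Multiset.esymm]
  · intro ρ hρ
    rw [mul_smul, h (ρ + 1) (by lia) (by simpa using hρ), smul_zero]

end CommSemiring

theorem pow_card_smul [CommRing R] [Module R M] {x : ι → R} {a : M} (h : EsymmAnnihilates x a)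
    (i : ι) : x i ^ Fintype.card ι • a = 0 := by
  rw [← h.prod_add_mul_smul (x i) (-1), prod_eq_zero (mem_univ i) (by ring), zero_smul]

end EsymmAnnihilates

/-- The representation of an additive monoid `G` on functions `G → M` by translation of the
argument. -/
def translation (G M : Type*) [AddMonoid G] [AddCommGroup M] :
    Representation ℤ (Multiplicative G) (G → M) where
  toFun v := LinearMap.funLeft ℤ M (· + v.toAdd)
  map_one' := by ext; simp
  map_mul' u v := by ext; simp [add_assoc]

/-- Functions `G → M` as a module over the algebra of translations, a formal sum `∑ c_v v` acting as
`f ↦ ∑ c_v f(· + v)`. It is only a local instance, because for a `ℤ[G]`-module `M` it conflicts with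
the pointwise action. -/
noncomputable abbrev translationModule {G M : Type*} [AddMonoid G] [AddCommGroup M] :
    Module (AddMonoidAlgebra ℤ G) (G → M) :=
  Module.compHom (G → M)
    (AddMonoidAlgebra.lift ℤ (Module.End ℤ (G → M)) G (translation G M)).toRingHom

attribute [local instance] translationModule

section Translation

variable {G H M : Type*} [AddMonoid G] [AddMonoid H] [AddCommGroup M]

theorem single_smul_apply (v : G) (c : ℤ) (f : G → M) (k : G) :
    (AddMonoidAlgebra.single v c • f) k = c • f (k + v) := by
  change AddMonoidAlgebra.lift ℤ _ G (translation G M) (AddMonoidAlgebra.single v c) f k = _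
  rw [AddMonoidAlgebra.lift_single]
  rfl

theorem smul_comp_addMonoidHom (φ : G →+ H) (p : AddMonoidAlgebra ℤ G) (f : H → M) :
    p • (f ∘ φ) = (AddMonoidAlgebra.mapDomainRingHom ℤ φ p • f) ∘ φ := by
  induction p using AddMonoidAlgebra.induction_linear with
  | zero => rw [map_zero, zero_smul, zero_smul]; rfl
  | add p q hp hq => rw [add_smul, hp, hq, map_add, add_smul]; rfl
  | single v c => ext k; simp [single_smul_apply]

end Translation

/-- Laurent polynomials with integer coefficients in the shifts `E_i`, `i : ι`; the monomial `E^v`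
is `AddMonoidAlgebra.single v 1`. -/
abbrev ShiftAlgebra (ι : Type*) : Type _ := AddMonoidAlgebra ℤ (ι → ℤ)

namespace ShiftAlgebra

variable {ι M : Type*} [AddCommGroup M]

/-- The automorphism of the shift algebra that sends `E_i` to `E_{σ⁻¹ i}`; this is how operators
move past the permutation `k ↦ k ∘ σ` of the arguments. -/
noncomputable def reindex (σ : Perm ι) : ShiftAlgebra ι →+* ShiftAlgebra ι :=
  AddMonoidAlgebra.mapDomainRingHom ℤ (LinearMap.funLeft ℤ ℤ σ).toAddMonoidHom

theorem smul_comp_perm (σ : Perm ι) (p : ShiftAlgebra ι) (f : (ι → ℤ) → M) :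
    (p • fun k => f (k ∘ σ)) = fun k => (reindex σ p • f) (k ∘ σ) :=
  smul_comp_addMonoidHom (LinearMap.funLeft ℤ ℤ σ).toAddMonoidHom p f

variable [DecidableEq ι]

/-- The power `E_i ^ t` of the shift in the `i`-th coordinate. -/
noncomputable def shift (i : ι) (t : ℤ) : ShiftAlgebra ι :=
  AddMonoidAlgebra.single (Pi.single i t) 1

/-- The forward difference `Δ_i = E_i - 1`. -/
noncomputable def diff (i : ι) : ShiftAlgebra ι := shift i 1 - 1

/-- The operator `V_{i,j} = E_i⁻¹ + E_j - E_i⁻¹ E_j`. -/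
noncomputable def laurentV (i j : ι) : ShiftAlgebra ι :=
  shift i (-1) + shift j 1 - shift i (-1) * shift j 1

theorem shift_neg_one_mul_shift_one (i : ι) : shift i (-1) * shift i 1 = 1 := by
  simp [shift, AddMonoidAlgebra.single_mul_single, ← Pi.single_add, AddMonoidAlgebra.one_def]

theorem prod_shift_one [Fintype ι] : ∏ i : ι, shift i 1 = AddMonoidAlgebra.single 1 1 := by
  simp_rw [shift, ← AddMonoidAlgebra.of'_apply, AddMonoidAlgebra.of'_eq_of, ← map_prod, ← ofAdd_sum]
  congr 2
  exact univ_sum_single 1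

theorem laurentV_eq_one_add (i j : ι) : laurentV i j = 1 + (1 - shift i (-1)) * diff j := by
  rw [laurentV, diff]
  ring

theorem shift_mul_laurentV (i j : ι) : shift i 1 * laurentV i j = 1 + shift j 1 * diff i := by
  rw [laurentV, diff]
  linear_combination (1 - shift j 1) * shift_neg_one_mul_shift_one i

theorem shift_smul_apply (i : ι) (t : ℤ) (f : (ι → ℤ) → M) (k : ι → ℤ) :
    (shift i t • f) k = f (k + Pi.single i t) := by
  rw [shift, single_smul_apply, one_smul]

theorem reindex_shift (σ : Perm ι) (i : ι) (t : ℤ) :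
    reindex σ (shift i t) = shift (σ.symm i) t := by
  simp only [reindex, shift, AddMonoidAlgebra.mapDomainRingHom_apply,
    AddMonoidAlgebra.mapDomain_single]
  congr 1
  exact Pi.single_comp_equiv σ i t

theorem reindex_diff (σ : Perm ι) (i : ι) : reindex σ (diff i) = diff (σ.symm i) := by
  simp [diff, reindex_shift]

theorem reindex_laurentV (σ : Perm ι) (i j : ι) :
    reindex σ (laurentV i j) = laurentV (σ.symm i) (σ.symm j) := by
  simp [laurentV, reindex_shift]

theorem eq_zero_of_prod_laurentV_smul_eq_zero {s : Finset ι} {i : ι} {m : ℕ} {f : (ι → ℤ) → M}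
    (hd : diff i ^ m • f = 0) (h : (∏ j ∈ s, laurentV j i) • f = 0) : f = 0 := by
  simp_rw [laurentV_eq_one_add] at h
  exact eq_zero_of_prod_one_add_mul_smul_eq_zero hd h

section Symmetric

variable [Fintype ι] {f : (ι → ℤ) → M} (hf : EsymmAnnihilates (diff (ι := ι)) f)
include hf

theorem prod_shift_smul : (∏ j : ι, shift j 1) • f = f := by
  simpa [diff] using hf.prod_add_mul_smul 1 1

theorem apply_add_one (k : ι → ℤ) : f (k + 1) = f k := by
  conv_rhs => rw [← prod_shift_smul hf, prod_shift_one, single_smul_apply, one_smul]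

theorem prod_laurentV_smul (i : ι) : (∏ j, laurentV i j) • f = f := by
  simpa [laurentV_eq_one_add] using hf.prod_add_mul_smul 1 (1 - shift i (-1))

theorem prod_laurentV_swap_smul (i : ι) : (∏ j, laurentV j i) • f = f := by
  have h := hf.prod_add_mul_smul 1 (shift i 1)
  simp_rw [← shift_mul_laurentV, prod_mul_distrib, mul_comm (∏ j, shift j 1), mul_smul,
    prod_shift_smul hf, one_pow, one_smul] at h
  exact h

theorem diff_pow_smul_comp_perm (σ : Perm ι) (i : ι) :
    (diff i ^ Fintype.card ι • fun k => f (k ∘ σ)) = 0 := by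
  rw [smul_comp_perm, map_pow, reindex_diff, hf.pow_card_smul]
  rfl

end Symmetric

end ShiftAlgebra

open ShiftAlgebra

section Cyclic

variable {N : ℕ} {M : Type*} [AddCommGroup M] {f : (Fin (N + 1) → ℤ) → M}
  (hswap : ∀ i : Fin N, ∀ k, (laurentV i.castSucc i.succ • f) k
    + (laurentV i.castSucc i.succ • f) (k ∘ swap i.castSucc i.succ) = 0)
include hswap

theorem laurentV_smul_comp_cycleRange_succ (i : Fin N) :
    (laurentV i.succ 0 • fun k => f (k ∘ i.succ.cycleRange))
      = -(laurentV 0 i.succ • fun k => f (k ∘ i.castSucc.cycleRange)) := by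
  simp_rw [smul_comp_perm, reindex_laurentV, Fin.cycleRange_symm_zero, Fin.cycleRange_symm_succ,
    Fin.succAbove_castSucc_self, Fin.succAbove_succ_self]
  ext k
  rw [cycleRange_succ_eq_mul_swap]
  exact eq_neg_of_add_eq_zero_right (hswap i (k ∘ i.castSucc.cycleRange))

theorem prod_laurentV_smul_comp_cycleRange (m : Fin (N + 1)) :
    ((∏ j ∈ Iic m, laurentV j 0) • fun k => f (k ∘ m.cycleRange))
      = (-1 : ℤ) ^ (m : ℕ) • (∏ j ∈ Iic m, laurentV 0 j) • f := by
  induction m using Fin.induction with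
  | zero =>
    rw [show Iic (0 : Fin (N + 1)) = {0} from Iic_bot]
    simp
  | succ i ih =>
    have hi : i.succ ∉ Iic i.castSucc := by simp
    rw [Iic_succ_eq_insert, prod_insert hi, prod_insert hi, mul_comm, mul_smul,
      laurentV_smul_comp_cycleRange_succ hswap, smul_neg, smul_comm, ih, mul_smul, Fin.val_succ,
      pow_succ, Fin.val_castSucc, smul_comm (laurentV 0 i.succ), mul_neg_one, neg_smul]

theorem eq_smul_comp_finRotate (hf : EsymmAnnihilates (diff (ι := Fin (N + 1))) f) :
    f = (-1 : ℤ) ^ N • fun k => f (k ∘ finRotate (N + 1)) := by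
  set g : (Fin (N + 1) → ℤ) → M := fun k => f (k ∘ finRotate (N + 1))
  have hprod : (∏ j : Fin (N + 1), laurentV j 0) • g = (-1 : ℤ) ^ N • f := by
    have h := prod_laurentV_smul_comp_cycleRange hswap (Fin.last N)
    rwa [show Iic (Fin.last N) = univ from Iic_top, prod_laurentV_smul hf, Fin.cycleRange_last,
      Fin.val_last] at h
  have hnil : diff (0 : Fin (N + 1)) ^ Fintype.card (Fin (N + 1)) • (f - (-1 : ℤ) ^ N • g) = 0 := by
    rw [smul_sub, hf.pow_card_smul, smul_comm, diff_pow_smul_comp_perm hf, smul_zero, sub_zero]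
  refine sub_eq_zero.1 (eq_zero_of_prod_laurentV_smul_eq_zero (s := univ) hnil ?_)
  rw [smul_sub, prod_laurentV_swap_smul hf, smul_comm, hprod, smul_smul, ← mul_pow, neg_one_mul,
    neg_neg, one_pow, one_smul, sub_self]

end Cyclic

/-- The translation vector `(0, -1, …, -(n - 1))` that turns `swapShift` into a transposition. -/
def staircase (n : ℕ) : Fin n → ℤ := fun j => -(j : ℤ)

theorem swapShift_add_staircase {N : ℕ} (k : Fin (N + 1) → ℤ) (i : Fin N) :
    swapShift (k + staircase (N + 1)) i.castSucc i.succ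
      = k ∘ swap i.castSucc i.succ + staircase (N + 1) := by
  ext j
  simp only [swapShift, staircase, Pi.add_apply, Function.comp_apply, swap_apply_def, apply_ite k]
  split_ifs with h₁ h₂
  · simp only [h₁, Fin.val_castSucc, Fin.val_succ, Nat.cast_succ]
    ring
  · simp only [h₂, Fin.val_castSucc, Fin.val_succ, Nat.cast_succ]
    ring
  · rfl

theorem comp_finRotate_sub_add_staircase {N : ℕ} (k : Fin (N + 1) → ℤ) :
    (k - staircase (N + 1)) ∘ finRotate (N + 1) + staircase (N + 1)
      = (fun j => if h : j.1 + 1 < N + 1 then k ⟨j.1 + 1, h⟩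
          else k ⟨0, N.succ_pos⟩ - (N + 1 : ℕ)) + 1 := by
  ext j
  induction j using Fin.lastCases with
  | last =>
    have h : ¬N + 1 < N + 1 := lt_irrefl _
    simp only [Pi.add_apply, Pi.sub_apply, Pi.one_apply, Function.comp_apply, finRotate_last,
      staircase, Fin.val_last, Fin.val_zero, dif_neg h, Fin.mk_zero, Nat.cast_succ, Nat.cast_zero]
    ring
  | cast j =>
    simp only [Pi.add_apply, Pi.sub_apply, Pi.one_apply, Function.comp_apply, finRotate_apply,
      Fin.coeSucc_eq_succ, staircase, Fin.val_castSucc, Nat.cast_succ,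
      dif_pos (Nat.succ_lt_succ j.isLt), Fin.succ]
    ring

theorem kup_eq_add_single {n : ℕ} (k : Fin n → ℤ) (i : Fin n) (t : ℤ) :
    kup k i t = k + Pi.single i t := by
  ext j
  simp only [kup, Pi.add_apply, Pi.single_apply]
  split_ifs <;> simp

theorem diff_smul_eq_DeltaOp {n : ℕ} (i : Fin n) (A : (Fin n → ℤ) → ℚ) :
    diff i • A = DeltaOp n i A := by
  ext k
  simp [diff, DeltaOp, sub_smul, shift_smul_apply, kup_eq_add_single]

theorem laurentV_smul_eq_Vop {n : ℕ} (i i' : Fin n) (A : (Fin n → ℤ) → ℚ) :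
    laurentV i i' • A = Vop A i i' := by
  ext k
  simp [laurentV, Vop, sub_smul, add_smul, mul_smul, shift_smul_apply, kup_eq_add_single]

theorem prod_diff_smul_eq_opProd {n : ℕ} (S : Finset (Fin n)) (A : (Fin n → ℤ) → ℚ) :
    (∏ i ∈ S, diff i) • A = opProd n (DeltaOp n) S A := by
  rw [← prod_map_toList, opProd]
  induction S.toList with
  | nil => simp
  | cons i l ih =>
    rw [List.map_cons, List.prod_cons, mul_smul, ih, diff_smul_eq_DeltaOp, List.foldr_cons,
      Function.comp_apply]

theorem esymm_diff_smul_eq_esymmOp {n : ℕ} (ρ : ℕ) (A : (Fin n → ℤ) → ℚ) :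
    (univ.val.map (diff (ι := Fin n))).esymm ρ • A = esymmOp n ρ (DeltaOp n) A := by
  ext k
  simp only [esymm_map_val, sum_smul, prod_diff_smul_eq_opProd, Finset.sum_apply, esymmOp]

theorem alpha_cyclic_identity_general {M : Type*} [AddCommGroup M] (n : ℕ) (hn : 1 ≤ n)
    (α : (Fin n → ℤ) → M)
    (h1 : ∀ i : Fin n, ∀ hi : i.1 + 1 < n, ∀ k : Fin n → ℤ,
      (laurentV i ⟨i.1 + 1, hi⟩ • α) k
        + (laurentV i ⟨i.1 + 1, hi⟩ • α) (swapShift k i ⟨i.1 + 1, hi⟩) = 0)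
    (h2 : EsymmAnnihilates (diff (ι := Fin n)) α) (k : Fin n → ℤ) :
    α k = (-1 : ℤ) ^ (n - 1) •
      α (fun j => if h : j.1 + 1 < n then k ⟨j.1 + 1, h⟩ else k ⟨0, hn⟩ - (n : ℤ)) := by
  obtain ⟨N, rfl⟩ := Nat.exists_eq_add_of_le' hn
  let v := staircase (N + 1)
  let f : (Fin (N + 1) → ℤ) → M := AddMonoidAlgebra.single v (1 : ℤ) • α
  have f_apply (p : ShiftAlgebra (Fin (N + 1))) (l) : (p • f) l = (p • α) (l + v) := by
    rw [smul_comm, single_smul_apply, one_smul]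
  have hswap (i : Fin N) (l) : (laurentV i.castSucc i.succ • f) l
      + (laurentV i.castSucc i.succ • f) (l ∘ swap i.castSucc i.succ) = 0 := by
    rw [f_apply, f_apply, ← swapShift_add_staircase]
    exact h1 i.castSucc _ _
  have hrot := congrFun (eq_smul_comp_finRotate hswap (h2.smul _)) (k - v)
  have f_eq (l) : f l = α (l + v) := by simpa only [one_smul] using f_apply 1 l
  rwa [Pi.smul_apply, f_eq, f_eq, sub_add_cancel, comp_finRotate_sub_add_staircase,
    apply_add_one h2] at hrot

/-- If `α : ℤ^n → ℚ` is the restriction of a polynomial, satisfies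
`(V_i α)(k) + (V_i α)(k') = 0` for each `i`, where `k'` replaces `(k_i, k_{i+1})` by
`(k_{i+1} + 1, k_i - 1)`, and is annihilated by `e_ρ(Δ_1, …, Δ_n)` for `1 ≤ ρ ≤ n`,
then `α(k_1, …, k_n) = (-1)^{n-1} α(k_2, …, k_n, k_1 - n)`. -/
theorem alpha_cyclic_identity (n : ℕ) (hn : 1 ≤ n) (α : (Fin n → ℤ) → ℚ)
    (hpoly : ∃ P : MvPolynomial (Fin n) ℚ,
      ∀ k : Fin n → ℤ, α k = MvPolynomial.eval (fun j => (k j : ℚ)) P)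
    (h1 : ∀ i : Fin n, ∀ hi : i.1 + 1 < n, ∀ k : Fin n → ℤ,
      Vop α i ⟨i.1 + 1, hi⟩ k + Vop α i ⟨i.1 + 1, hi⟩ (swapShift k i ⟨i.1 + 1, hi⟩) = 0)
    (h2 : ∀ ρ : ℕ, 1 ≤ ρ → ρ ≤ n → esymmOp n ρ (DeltaOp n) α = 0) :
    ∀ k : Fin n → ℤ,
      α k = (-1 : ℚ) ^ (n - 1) *
        α (fun j => if h : j.1 + 1 < n then k ⟨j.1 + 1, h⟩ else k ⟨0, by omega⟩ - (n : ℤ)) := by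
  simp only [← laurentV_smul_eq_Vop] at h1
  simp only [← esymm_diff_smul_eq_esymmOp] at h2
  intro k
  simpa using alpha_cyclic_identity_general n hn α h1 (by simpa [EsymmAnnihilates] using h2) k
end

section
/- Let n ≥ 1 and let P be a polynomial in n variables with rational coefficients such that for every strictly increasing (k_1 < k_2 < ... < k_n) ∈ ℤ^n, P(k_1,...,k_n) equals the number of monotone triangles of order n with bottom row a_{n,j} = k_j. Then for every weakly increasing (k_1 ≤ k_2 ≤ ... ≤ k_n) ∈ ℤ^n, P(k_1,...,k_n) equals the number of triangular integer arrays (a_{i,j})_{1 ≤ j ≤ i ≤ n} with a_{n,j} = k_j, with a_{i+1,j} ≤ a_{i,j} ≤ a_{i+1,j+1} for all 1 ≤ j ≤ i ≤ n−1, and with a_{i,j} < a_{i,j+1} for all 1 ≤ j < i ≤ n−1 (i.e., all rows except possibly the bottom row are strictly increasing). -/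
/-- Every row of the triangular array is strictly increasing. -/
def StrictRows {n : ℕ} (a : ∀ i : Fin n, Fin (i.1 + 1) → ℤ) : Prop :=
  ∀ i : Fin n, ∀ j : Fin (i.1 + 1), ∀ h : j.1 + 1 < i.1 + 1, a i j < a i ⟨j.1 + 1, h⟩

/-- Every row except possibly the bottom row is strictly increasing. -/
def StrictRowsAboveBottom {n : ℕ} (a : ∀ i : Fin n, Fin (i.1 + 1) → ℤ) : Prop :=
  ∀ i : Fin n, i.1 + 1 < n →
    ∀ j : Fin (i.1 + 1), ∀ h : j.1 + 1 < i.1 + 1, a i j < a i ⟨j.1 + 1, h⟩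

/-!
Let `α k` be the number of triangles with weakly increasing bottom row `k` and all other rows
strictly increasing. It suffices that `α` itself is polynomial on weakly increasing `k`: along
`k + t • (0, 1, …, n - 1)` the polynomials `P` and `α` agree for `t ≥ 1`, hence also at `t = 0`.

Removing the bottom row gives `α k = ∑ α l` over the strictly increasing rows `l` interlacing
with `k`. Inclusion–exclusion over the sets `S` of neighbouring pairs at which `l` has equal
entries removes the strictness. If `S` contains two overlapping pairs, three entries of `l`
coincide and `α l = 0`. Otherwise the `l` with the equalities in `S` fill a box whose sides are
intervals between entries of `k`, never reversed, so by the Bernoulli polynomials summing a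
polynomial over it gives a polynomial in `k`.
-/

open Finset MvPolynomial

section InclusionExclusion

variable {α ι R : Type*} [CommRing R]

theorem sum_filter_forall_not (A : Finset α) (s : Finset ι) (p : ι → α → Prop)
    [∀ i, DecidablePred (p i)] (f : α → R) :
    ∑ a ∈ A with ∀ i ∈ s, ¬ p i a, f a =
      ∑ t ∈ s.powerset, (-1) ^ #t * ∑ a ∈ A with ∀ i ∈ t, p i a, f a := by
  have indicator (a : α) : (if ∀ i ∈ s, ¬ p i a then (1 : R) else 0) =
      ∑ t ∈ s.powerset, (-1) ^ #t * if ∀ i ∈ t, p i a then 1 else 0 := by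
    calc (if ∀ i ∈ s, ¬ p i a then (1 : R) else 0)
        = ∏ i ∈ s, (1 + -1 * if p i a then 1 else 0) := by
          rw [← prod_boole]
          exact prod_congr rfl fun i _ => by by_cases h : p i a <;> simp [h]
      _ = ∑ t ∈ s.powerset, (-1) ^ #t * if ∀ i ∈ t, p i a then 1 else 0 := by
          simp only [prod_one_add, prod_mul_distrib, prod_const, prod_boole]
  calc ∑ a ∈ A with ∀ i ∈ s, ¬ p i a, f a
      = ∑ a ∈ A, (if ∀ i ∈ s, ¬ p i a then 1 else 0) * f a := by simp [sum_filter]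
    _ = ∑ t ∈ s.powerset, ∑ a ∈ A, (-1) ^ #t * (if ∀ i ∈ t, p i a then 1 else 0) * f a := by
        simp only [indicator, sum_mul]
        exact sum_comm
    _ = _ := by simp [sum_filter, mul_sum]

end InclusionExclusion

/-! ### Polynomial functions on integer points -/

section PolynomialFunctions

variable {σ τ ι : Type*}

/-- `f` agrees on the integer points of `s` with a polynomial function with rational
coefficients. -/
def IsPolynomialOn (s : Set (σ → ℤ)) (f : (σ → ℤ) → ℚ) : Prop :=
  ∃ P : MvPolynomial σ ℚ, ∀ k ∈ s, f k = eval (fun i => (k i : ℚ)) P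

namespace IsPolynomialOn

variable {s t : Set (σ → ℤ)} {f g : (σ → ℤ) → ℚ}

theorem const (c : ℚ) : IsPolynomialOn s fun _ => c :=
  ⟨C c, fun _ _ => (eval_C c).symm⟩

theorem congr (hf : IsPolynomialOn s f) (h : ∀ k ∈ s, g k = f k) : IsPolynomialOn s g :=
  let ⟨P, hP⟩ := hf
  ⟨P, fun k hk => (h k hk).trans (hP k hk)⟩

theorem mono (hf : IsPolynomialOn t f) (h : s ⊆ t) : IsPolynomialOn s f :=
  let ⟨P, hP⟩ := hf
  ⟨P, fun k hk => hP k (h hk)⟩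

theorem const_mul (hf : IsPolynomialOn s f) (c : ℚ) : IsPolynomialOn s fun k => c * f k :=
  let ⟨P, hP⟩ := hf
  ⟨C c * P, fun k hk => by simp [hP k hk]⟩

theorem sum {A : Finset ι} {f : ι → (σ → ℤ) → ℚ} (hf : ∀ i ∈ A, IsPolynomialOn s (f i)) :
    IsPolynomialOn s fun k => ∑ i ∈ A, f i k := by
  choose! P hP using hf
  exact ⟨∑ i ∈ A, P i, fun k hk => by
    rw [map_sum]
    exact sum_congr rfl fun i hi => hP i hi k hk⟩

theorem prod {A : Finset ι} {f : ι → (σ → ℤ) → ℚ} (hf : ∀ i ∈ A, IsPolynomialOn s (f i)) :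
    IsPolynomialOn s fun k => ∏ i ∈ A, f i k := by
  choose! P hP using hf
  exact ⟨∏ i ∈ A, P i, fun k hk => by
    rw [map_prod]
    exact prod_congr rfl fun i hi => hP i hi k hk⟩

end IsPolynomialOn

theorem sum_Icc_int_sub {G : Type*} [AddCommGroup G] (g : ℤ → G) {a b : ℤ} (hab : a ≤ b) :
    ∑ x ∈ Icc a b, (g (x + 1) - g x) = g (b + 1) - g a := by
  induction b, hab using Int.leInduction with
  | base => simp
  | succ b hb ih =>
    rw [← insert_Icc_right_eq_Icc_add_one (by omega), sum_insert (by simp), ih]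
    abel

theorem sum_Icc_int_pow (d : ℕ) {a b : ℤ} (hab : a ≤ b) :
    ∑ x ∈ Icc a b, (x : ℚ) ^ d =
      ((Polynomial.bernoulli (d + 1)).eval (b + 1 : ℚ) -
        (Polynomial.bernoulli (d + 1)).eval (a : ℚ)) / (d + 1) := by
  have pow_eq (x : ℤ) : (x : ℚ) ^ d =
      (Polynomial.bernoulli (d + 1)).eval ((x + 1 : ℤ) : ℚ) / (d + 1) -
        (Polynomial.bernoulli (d + 1)).eval (x : ℚ) / (d + 1) := by
    have := Polynomial.bernoulli_eval_one_add (d + 1) (x : ℚ)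
    push_cast [add_comm (x : ℚ), this]
    field_simp
    simp
  simp only [pow_eq]
  rw [sum_Icc_int_sub (fun x : ℤ => (Polynomial.bernoulli (d + 1)).eval (x : ℚ) / (d + 1)) hab]
  push_cast
  ring

theorem isPolynomialOn_sum_Icc_pow (i j : σ) (d : ℕ) :
    IsPolynomialOn {k | k i ≤ k j} fun k => ∑ x ∈ Icc (k i) (k j), (x : ℚ) ^ d := by
  let B := Polynomial.bernoulli (d + 1)
  refine ⟨C (d + 1 : ℚ)⁻¹ * (B.aeval (X j + 1) - B.aeval (X i)), fun k hk => ?_⟩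
  have eval_aeval (Q : MvPolynomial σ ℚ) :
      eval (fun i => (k i : ℚ)) (B.aeval Q) = B.eval (eval (fun i => (k i : ℚ)) Q) := by
    rw [← coe_aeval_eq_eval, RingHom.coe_coe, ← Polynomial.aeval_algHom_apply,
      Polynomial.coe_aeval_eq_eval]
  exact (sum_Icc_int_pow d hk).trans (by simp [eval_aeval, B, div_eq_inv_mul])

theorem isPolynomialOn_sum_Icc_eval [Fintype τ] [DecidableEq τ] (u v : τ → σ)
    (P : MvPolynomial τ ℚ) :
    IsPolynomialOn {k | k ∘ u ≤ k ∘ v}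
      fun k => ∑ l ∈ Icc (k ∘ u) (k ∘ v), eval (fun i => (l i : ℚ)) P := by
  have key (d : τ →₀ ℕ) : IsPolynomialOn {k | k ∘ u ≤ k ∘ v}
      fun k => ∏ i, ∑ x ∈ Icc (k (u i)) (k (v i)), (x : ℚ) ^ d i :=
    .prod fun i _ => (isPolynomialOn_sum_Icc_pow (u i) (v i) (d i)).mono fun _ hk => hk i
  refine (IsPolynomialOn.sum (A := P.support) fun d _ => (key d).const_mul (P.coeff d)).congr
    fun k _ => ?_
  simp only [eval_eq', prod_univ_sum, mul_sum]
  exact sum_comm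

end PolynomialFunctions

section Extrapolation

variable {R : Type*} [CommRing R]

theorem sum_neg_one_pow_mul_choose_smul_eval (p : Polynomial R) {n : ℕ} (hn : p.natDegree < n) :
    ∑ j ∈ range (n + 1), ((-1 : ℤ) ^ (n - j) * n.choose j) • p.eval (j : R) = 0 := by
  simpa [fwdDiff_iter_eq_sum_shift] using
    congr_fun (Polynomial.fwdDiff_iter_eq_zero_of_degree_lt hn) 0

-- The vanishing of high differences expresses both `p 0` and `z 0` by the same integer
-- combination of later values, so `R` may have torsion and need not receive a map from `ℚ`.
theorem eval_zero_eq_intCast {p : Polynomial R} {q : Polynomial ℚ} {z : ℕ → ℤ}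
    (hp : ∀ t : ℕ, p.eval ((t + 1 : ℕ) : R) = z (t + 1)) (hq : ∀ t : ℕ, q.eval (t : ℚ) = z t) :
    p.eval 0 = z 0 := by
  obtain ⟨n, hpn, hqn⟩ : ∃ n, p.natDegree < n ∧ q.natDegree < n :=
    ⟨max p.natDegree q.natDegree + 1, by omega, by omega⟩
  have hz : ∑ j ∈ range (n + 1), ((-1 : ℤ) ^ (n - j) * n.choose j) * z j = 0 := by
    have := sum_neg_one_pow_mul_choose_smul_eval q hqn
    simp only [hq, zsmul_eq_mul] at this
    exact_mod_cast this
  have hdiff : ∑ j ∈ range (n + 1),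
      ((-1 : ℤ) ^ (n - j) * n.choose j) • (p.eval (j : R) - z j) = 0 := by
    simp only [smul_sub, sum_sub_distrib, sum_neg_one_pow_mul_choose_smul_eval p hpn, zero_sub]
    simpa using congrArg (Int.cast : ℤ → R) hz
  have hzero : (-1) ^ n * (p.eval 0 - z 0) = 0 := by
    rw [sum_range_succ', sum_eq_zero fun t _ => by rw [hp, sub_self, smul_zero]] at hdiff
    simpa using hdiff
  exact sub_eq_zero.1 <| (isUnit_one.neg.pow n).mul_right_eq_zero.1 hzero

theorem exists_polynomial_eval_line {S σ : Type*} [CommSemiring S] (P : MvPolynomial σ S)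
    (a b : σ → S) :
    ∃ p : Polynomial S, ∀ t, p.eval t = eval (fun i => a i + b i * t) P := by
  refine ⟨eval₂ Polynomial.C (fun i => .C (a i) + .C (b i) * .X) P, fun t => ?_⟩
  have eval_comp_C : (Polynomial.evalRingHom t).comp Polynomial.C = RingHom.id S := by ext; simp
  simp [polynomial_eval_eval₂, eval_comp_C, eval₂_id]

theorem eval_eq_intCast_of_strictMono {n : ℕ} {f : (Fin n → ℤ) → ℤ}
    (hf : IsPolynomialOn {k | Monotone k} fun k => f k) {P : MvPolynomial (Fin n) R}
    (hP : ∀ k : Fin n → ℤ, StrictMono k → eval (fun i => (k i : R)) P = f k) {k : Fin n → ℤ}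
    (hk : Monotone k) : eval (fun i => (k i : R)) P = f k := by
  obtain ⟨Q, hQ⟩ := hf
  let line (t : ℕ) (i : Fin n) : ℤ := k i + i * t
  have line_mono (t : ℕ) : Monotone (line t) := fun i j hij => by
    have : (i : ℤ) ≤ j := by exact_mod_cast hij
    exact add_le_add (hk hij) (by gcongr)
  have line_strictMono (t : ℕ) : StrictMono (line (t + 1)) := fun i j hij => by
    have : (i : ℤ) < j := by exact_mod_cast hij
    exact add_lt_add_of_le_of_lt (hk hij.le) (by gcongr)
  obtain ⟨p, hp⟩ := exists_polynomial_eval_line P (fun i => (k i : R)) (fun i => (i : ℕ))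
  obtain ⟨q, hq⟩ := exists_polynomial_eval_line Q (fun i => (k i : ℚ)) (fun i => (i : ℕ))
  have h0 : p.eval 0 = f (line 0) := eval_zero_eq_intCast (q := q) (z := fun t => f (line t))
    (fun t => by rw [hp, ← hP _ (line_strictMono t)]; simp [line])
    (fun t => by simpa [hq, line] using (hQ _ (line_mono t)).symm)
  simpa [hp, line] using h0

end Extrapolation

/-! ### Interlacing rows -/

section Interlacing

variable {n : ℕ}

theorem covBy_iff_succ_eq_castSucc {i j : Fin n} : i ⋖ j ↔ i.succ = j.castSucc := by
  simp [Fin.covBy_iff, Nat.covBy_iff_add_one_eq, Fin.ext_iff]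

/-- The pairs of neighbouring positions in a row of length `n`. -/
def neighbours (n : ℕ) : Finset (Fin n × Fin n) :=
  {e | e.1.succ = e.2.castSucc}

theorem mem_neighbours {e : Fin n × Fin n} : e ∈ neighbours n ↔ e.1.succ = e.2.castSucc := by
  simp [neighbours]

theorem strictMono_iff_forall_neighbours_ne {β : Type*} [PartialOrder β] {l : Fin n → β}
    (hl : Monotone l) :
    StrictMono l ↔ ∀ e ∈ neighbours n, l e.1 ≠ l e.2 := by
  simp only [strictMono_iff_forall_covBy, mem_neighbours, ← covBy_iff_succ_eq_castSucc, Prod.forall]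
  exact forall₃_congr fun i j hij => (hl hij.le).lt_iff_ne

/-- The index of the entry of `k` bounding `l j` from below, for rows `l` interlacing with `k`
and with equal entries at each pair in `S`: if `l j = l (j + 1)`, both are `k (j + 1)`. -/
def lowerIndex (S : Finset (Fin n × Fin n)) (j : Fin n) : Fin (n + 1) :=
  if ∃ i, (j, i) ∈ S then j.succ else j.castSucc

/-- The index of the entry of `k` bounding `l j` from above; see `lowerIndex`. -/
def upperIndex (S : Finset (Fin n × Fin n)) (j : Fin n) : Fin (n + 1) :=
  if ∃ i, (i, j) ∈ S then j.castSucc else j.succ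

variable {S : Finset (Fin n × Fin n)}

theorem castSucc_le_lowerIndex (j : Fin n) : j.castSucc ≤ lowerIndex S j := by
  rw [lowerIndex]
  split_ifs
  exacts [j.castSucc_lt_succ.le, le_rfl]

theorem upperIndex_le_succ (j : Fin n) : upperIndex S j ≤ j.succ := by
  rw [upperIndex]
  split_ifs
  exacts [j.castSucc_lt_succ.le, le_rfl]

theorem lowerIndex_le_upperIndex (hS : ¬ ∃ i j i', (i, j) ∈ S ∧ (j, i') ∈ S) (j : Fin n) :
    lowerIndex S j ≤ upperIndex S j := by
  rw [lowerIndex, upperIndex]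
  split_ifs with h h'
  · obtain ⟨i', hi'⟩ := h
    obtain ⟨i, hi⟩ := h'
    exact absurd ⟨i, j, i', hi, hi'⟩ hS
  exacts [le_rfl, le_rfl, j.castSucc_lt_succ.le]

variable {β : Type*} [PartialOrder β] [DecidableEq β] [LocallyFiniteOrder β] {k : Fin (n + 1) → β}

theorem mem_Icc_init_tail {l : Fin n → β} :
    l ∈ Icc (Fin.init k) (Fin.tail k) ↔ ∀ j, k j.castSucc ≤ l j ∧ l j ≤ k j.succ := by
  simp only [mem_Icc, Pi.le_def, Fin.init, Fin.tail, forall_and]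

theorem monotone_of_mem_Icc_init_tail {l : Fin n → β}
    (hl : l ∈ Icc (Fin.init k) (Fin.tail k)) : Monotone l :=
  (monotone_iff_forall_covBy l).2 fun i j hij => by
    rw [mem_Icc_init_tail] at hl
    exact (hl i).2.trans (covBy_iff_succ_eq_castSucc.1 hij ▸ (hl j).1)

theorem filter_Icc_init_tail_eq (hk : Monotone k) (hS : S ⊆ neighbours n) :
    {l ∈ Icc (Fin.init k) (Fin.tail k) | ∀ e ∈ S, l e.1 = l e.2} =
      Icc (k ∘ lowerIndex S) (k ∘ upperIndex S) := by
  have adjacent {i j : Fin n} (h : (i, j) ∈ S) : i.succ = j.castSucc := mem_neighbours.1 (hS h)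
  ext l
  rw [mem_filter]
  constructor
  · rintro ⟨hl, heq⟩
    rw [mem_Icc_init_tail] at hl
    refine mem_Icc.2 ⟨fun j => ?_, fun j => ?_⟩
    · simp only [Function.comp, lowerIndex]
      split_ifs with h
      · obtain ⟨i, hi⟩ := h
        rw [adjacent hi, heq _ hi]
        exact (hl i).1
      · exact (hl j).1
    · simp only [Function.comp, upperIndex]
      split_ifs with h
      · obtain ⟨i, hi⟩ := h
        rw [← adjacent hi, ← heq _ hi]
        exact (hl i).2
      · exact (hl j).2
  · intro hl
    obtain ⟨hlo, hup⟩ := mem_Icc.1 hl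
    have hl' : l ∈ Icc (Fin.init k) (Fin.tail k) := mem_Icc_init_tail.2 fun j =>
      ⟨(hk (castSucc_le_lowerIndex j)).trans (hlo j), (hup j).trans (hk (upperIndex_le_succ j))⟩
    refine ⟨hl', fun ⟨i, j⟩ h => (monotone_of_mem_Icc_init_tail hl' ?_).antisymm ?_⟩
    · exact (covBy_iff_succ_eq_castSucc.2 (adjacent h)).le
    · have hj : l j ≤ k j.castSucc := by
        simpa [upperIndex, show ∃ i, (i, j) ∈ S from ⟨i, h⟩] using hup j
      have hi : k i.succ ≤ l i := by
        simpa [lowerIndex, show ∃ j, (i, j) ∈ S from ⟨j, h⟩] using hlo i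
      exact hj.trans (adjacent h ▸ hi)

end Interlacing

/-! ### Triangular arrays -/

section Triangle

variable {n : ℕ}

/-- Triangular integer arrays `(a_{i,j})_{1 ≤ j ≤ i ≤ n}`; row `i : Fin n` has `i + 1` entries. -/
abbrev Triangle (n : ℕ) : Type := ∀ i : Fin n, Fin (i.1 + 1) → ℤ

/-- The last row of a triangular array, as a function on `Fin n` also when `n = 0`. -/
def bottomRow (a : Triangle n) : Fin n → ℤ := fun j =>
  a ⟨n - 1, Nat.sub_one_lt_of_lt j.isLt⟩ ⟨j, Nat.lt_add_one_of_le (Nat.le_sub_one_of_lt j.isLt)⟩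

theorem bottomRow_iff {a : Triangle n} {k : Fin n → ℤ} : BottomRow a k ↔ bottomRow a = k := by
  constructor
  · exact fun h => funext fun j => h _ (Nat.sub_add_cancel (Nat.one_le_of_lt j.isLt)) _
  · rintro rfl ⟨i, hi⟩ hin j
    obtain rfl : n = i + 1 := hin.symm
    rfl

theorem strictRows_iff_forall_strictMono {a : Triangle n} :
    StrictRows a ↔ ∀ i, StrictMono (a i) :=
  forall_congr' fun _ => .symm <| Fin.strictMono_iff_lt_succ.trans
    ⟨fun h j hj => h ⟨j, Nat.lt_of_succ_lt_succ hj⟩,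
      fun h j => h j.castSucc (Nat.succ_lt_succ j.isLt)⟩

theorem strictRowsAboveBottom_iff_init {a : Triangle (n + 1)} :
    StrictRowsAboveBottom a ↔ StrictRows (Fin.init a) :=
  ⟨fun h i => h i.castSucc (Nat.succ_lt_succ i.isLt),
    fun h i hi => h ⟨i, Nat.lt_of_succ_lt_succ hi⟩⟩

theorem strictRows_iff {a : Triangle n} :
    StrictRows a ↔ StrictRowsAboveBottom a ∧ StrictMono (bottomRow a) := by
  cases n with
  | zero => exact ⟨fun _ => ⟨fun i => i.elim0, fun i => i.elim0⟩, fun _ i => i.elim0⟩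
  | succ n =>
    rw [strictRowsAboveBottom_iff_init, strictRows_iff_forall_strictMono,
      strictRows_iff_forall_strictMono, Fin.forall_fin_succ']
    rfl

theorem isGT_iff_init {a : Triangle (n + 1)} :
    IsGT a ↔ IsGT (Fin.init a) ∧
      bottomRow (Fin.init a) ∈ Icc (Fin.init (bottomRow a)) (Fin.tail (bottomRow a)) := by
  rw [mem_Icc_init_tail]
  cases n with
  | zero =>
    exact ⟨fun _ => ⟨fun i => i.elim0, fun j => j.elim0⟩, fun _ i hi => by omega⟩
  | succ m =>
    constructor
    · exact fun h => ⟨fun i hi j => h i.castSucc (by simp; omega) j,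
        fun j => h (Fin.last m).castSucc (by simp) j⟩
    · rintro ⟨h, hbottom⟩ i hi j
      induction i using Fin.lastCases with
      | last => simp at hi
      | cast i =>
        induction i using Fin.lastCases with
        | last => exact hbottom j
        | cast i => exact h i.castSucc (by simp) j

/-- Monotone triangles with bottom row `k`, except that the bottom row need not be strictly
increasing. -/
abbrev WeakMonotoneTriangle (k : Fin n → ℤ) : Type :=
  {a : Triangle n // IsGT a ∧ StrictRowsAboveBottom a ∧ BottomRow a k}

theorem weakMonotoneTriangle_iff_init {a : Triangle (n + 1)} {k : Fin (n + 1) → ℤ} :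
    (IsGT a ∧ StrictRowsAboveBottom a ∧ BottomRow a k) ↔
      (IsGT (Fin.init a) ∧ StrictRowsAboveBottom (Fin.init a)) ∧
        bottomRow (Fin.init a) ∈ Icc (Fin.init k) (Fin.tail k) ∧
        StrictMono (bottomRow (Fin.init a)) ∧ a (Fin.last n) = k := by
  have hlast : bottomRow a = a (Fin.last n) := rfl
  rw [isGT_iff_init, strictRowsAboveBottom_iff_init, strictRows_iff, bottomRow_iff, hlast]
  constructor
  · rintro ⟨⟨hGT, hmem⟩, ⟨habove, hstrict⟩, rfl⟩
    exact ⟨⟨hGT, habove⟩, hmem, hstrict, rfl⟩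
  · rintro ⟨⟨hGT, habove⟩, hmem, hstrict, rfl⟩
    exact ⟨⟨hGT, hmem⟩, ⟨habove, hstrict⟩, rfl⟩

theorem sigma_weakMonotoneTriangle_ext {p : (Fin n → ℤ) → Prop}
    {x y : Σ l : {l // p l}, WeakMonotoneTriangle l.1} (h : x.2.1 = y.2.1) : x = y := by
  obtain ⟨⟨l, _⟩, a, _, _, ha⟩ := x
  obtain ⟨⟨l', _⟩, b, _, _, hb⟩ := y
  obtain rfl : a = b := h
  obtain rfl := bottomRow_iff.1 ha
  obtain rfl := bottomRow_iff.1 hb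
  rfl

open Classical in
/-- Removing the bottom row `k` leaves a triangle whose bottom row is strictly increasing and
interlaces with `k`. -/
noncomputable def removeBottomRow (k : Fin (n + 1) → ℤ) : WeakMonotoneTriangle k ≃
    Σ l : {l ∈ Icc (Fin.init k) (Fin.tail k) | StrictMono l}, WeakMonotoneTriangle l.1 where
  toFun a :=
    have h := weakMonotoneTriangle_iff_init.1 a.2
    ⟨⟨bottomRow (Fin.init a.1), mem_filter.2 ⟨h.2.1, h.2.2.1⟩⟩,
      ⟨Fin.init a.1, h.1.1, h.1.2, bottomRow_iff.2 rfl⟩⟩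
  invFun x :=
    ⟨Fin.snoc (α := fun i : Fin (n + 1) => Fin (i.1 + 1) → ℤ) x.2.1 k, by
      obtain ⟨⟨l, hl⟩, b, hGT, habove, hb⟩ := x
      obtain ⟨hmem, hstrict⟩ := mem_filter.1 hl
      obtain rfl := bottomRow_iff.1 hb
      rw [weakMonotoneTriangle_iff_init, Fin.init_snoc, Fin.snoc_last]
      exact ⟨⟨hGT, habove⟩, hmem, hstrict, rfl⟩⟩
  left_inv a := Subtype.ext <| by
    obtain ⟨-, -, -, hlast⟩ := weakMonotoneTriangle_iff_init.1 a.2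
    simp [← hlast]
  right_inv _ := sigma_weakMonotoneTriangle_ext
    (Fin.init_snoc (α := fun i => Fin (i.1 + 1) → ℤ) _ _)

instance (k : Fin n → ℤ) : Finite (WeakMonotoneTriangle k) := by
  classical
  induction n with
  | zero => infer_instance
  | succ n ih => exact Finite.of_equiv _ (removeBottomRow k).symm

open Classical in
theorem card_weakMonotoneTriangle_succ (k : Fin (n + 1) → ℤ) :
    Nat.card (WeakMonotoneTriangle k) =
      ∑ l ∈ Icc (Fin.init k) (Fin.tail k) with StrictMono l, Nat.card (WeakMonotoneTriangle l) := by
  rw [Nat.card_congr (removeBottomRow k), Nat.card_sigma]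
  exact sum_coe_sort _ fun l => Nat.card (WeakMonotoneTriangle l)

-- Two entries of the row above the bottom one would be squeezed to the common value.
theorem isEmpty_weakMonotoneTriangle {k : Fin n → ℤ} (hk : Monotone k) {i j i' : Fin n}
    (hij : i < j) (hji' : j < i') (heq : k i = k i') : IsEmpty (WeakMonotoneTriangle k) := by
  cases n with
  | zero => exact i.elim0
  | succ n =>
    refine ⟨fun a => ?_⟩
    obtain ⟨-, hmem, hstrict, -⟩ := weakMonotoneTriangle_iff_init.1 a.2
    rw [mem_Icc_init_tail] at hmem
    obtain ⟨p, rfl⟩ := Fin.exists_castSucc_eq.2 (Fin.ne_last_of_lt hij)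
    obtain ⟨q, rfl⟩ := Fin.exists_castSucc_eq.2 (Fin.ne_last_of_lt hji')
    have hlt : bottomRow (Fin.init a.1) p < bottomRow (Fin.init a.1) q := hstrict hij
    have hle : k q.succ ≤ k i' := hk (Fin.castSucc_lt_iff_succ_le.1 hji')
    linarith [(hmem p).1, (hmem q).2]

end Triangle

theorem card_weakMonotoneTriangle_succ_eq_alternating_sum {n : ℕ} (k : Fin (n + 1) → ℤ) :
    (Nat.card (WeakMonotoneTriangle k) : ℚ) =
      ∑ S ∈ (neighbours n).powerset, (-1) ^ #S *
        ∑ l ∈ Icc (Fin.init k) (Fin.tail k) with ∀ e ∈ S, l e.1 = l e.2,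
          (Nat.card (WeakMonotoneTriangle l) : ℚ) := by
  classical
  calc (Nat.card (WeakMonotoneTriangle k) : ℚ)
      = ∑ l ∈ Icc (Fin.init k) (Fin.tail k) with ∀ e ∈ neighbours n, l e.1 ≠ l e.2,
          (Nat.card (WeakMonotoneTriangle l) : ℚ) := by
        rw [card_weakMonotoneTriangle_succ, Nat.cast_sum]
        exact sum_congr (filter_congr fun l hl =>
          strictMono_iff_forall_neighbours_ne (monotone_of_mem_Icc_init_tail hl)) fun _ _ => rfl
    _ = _ := by
        convert! sum_filter_forall_not (Icc (Fin.init k) (Fin.tail k)) (neighbours n)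
          (fun e l => l e.1 = l e.2) fun l => (Nat.card (WeakMonotoneTriangle l) : ℚ)

theorem isPolynomialOn_sum_filter_card {n : ℕ}
    (hcard : IsPolynomialOn {l : Fin n → ℤ | Monotone l}
      fun l => (Nat.card (WeakMonotoneTriangle l) : ℚ))
    {S : Finset (Fin n × Fin n)} (hS : S ⊆ neighbours n) :
    IsPolynomialOn {k | Monotone k} fun k =>
      ∑ l ∈ Icc (Fin.init k) (Fin.tail k) with ∀ e ∈ S, l e.1 = l e.2,
        (Nat.card (WeakMonotoneTriangle l) : ℚ) := by
  by_cases hchain : ∃ i j i', (i, j) ∈ S ∧ (j, i') ∈ S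
  · obtain ⟨i, j, i', hij, hji'⟩ := hchain
    have lt_of_mem {i j : Fin n} (h : (i, j) ∈ S) : i < j :=
      (covBy_iff_succ_eq_castSucc.2 (mem_neighbours.1 (hS h))).lt
    refine (IsPolynomialOn.const 0).congr fun k _ => sum_eq_zero fun l hl => ?_
    obtain ⟨hmem, heq⟩ := mem_filter.1 hl
    have := isEmpty_weakMonotoneTriangle (monotone_of_mem_Icc_init_tail hmem)
      (lt_of_mem hij) (lt_of_mem hji') ((heq _ hij).trans (heq _ hji'))
    simp
  · obtain ⟨Q, hQ⟩ := hcard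
    refine ((isPolynomialOn_sum_Icc_eval (lowerIndex S) (upperIndex S) Q).mono
      fun k (hk : Monotone k) j => hk (lowerIndex_le_upperIndex hchain j)).congr fun k hk => ?_
    rw [← filter_Icc_init_tail_eq hk hS]
    exact sum_congr rfl fun l hl => hQ l (monotone_of_mem_Icc_init_tail (mem_filter.1 hl).1)

theorem isPolynomialOn_card_weakMonotoneTriangle (n : ℕ) :
    IsPolynomialOn {k : Fin n → ℤ | Monotone k}
      fun k => (Nat.card (WeakMonotoneTriangle k) : ℚ) := by
  induction n with
  | zero =>
    refine (IsPolynomialOn.const 1).congr fun k _ => ?_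
    have : Nonempty (WeakMonotoneTriangle k) :=
      ⟨fun i => i.elim0, fun i => i.elim0, fun i => i.elim0, fun i => i.elim0⟩
    exact_mod_cast Nat.card_unique
  | succ n ih =>
    refine (IsPolynomialOn.sum fun S hS => (isPolynomialOn_sum_filter_card ih
      (mem_powerset.1 hS)).const_mul ((-1) ^ #S)).congr fun k _ => ?_
    exact card_weakMonotoneTriangle_succ_eq_alternating_sum k

theorem card_monotoneTriangle_eq {n : ℕ} {k : Fin n → ℤ} (hk : StrictMono k) :
    Nat.card {a : Triangle n // IsGT a ∧ StrictRows a ∧ BottomRow a k} =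
      Nat.card (WeakMonotoneTriangle k) :=
  Nat.card_congr <| Equiv.subtypeEquivRight fun a => by
    rw [strictRows_iff, bottomRow_iff]
    constructor
    · exact fun ⟨hGT, hrows, hbottom⟩ => ⟨hGT, hrows.1, hbottom⟩
    · rintro ⟨hGT, habove, rfl⟩
      exact ⟨hGT, ⟨habove, hk⟩, rfl⟩

theorem monotone_triangle_weakly_increasing_general {n : ℕ} {R : Type*} [CommRing R]
    (P : MvPolynomial (Fin n) R)
    (hP : ∀ k : Fin n → ℤ, StrictMono k →
      eval (fun i => (k i : R)) P =
        (Nat.card {a : Triangle n // IsGT a ∧ StrictRows a ∧ BottomRow a k} : R))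
    {k : Fin n → ℤ} (hk : Monotone k) :
    eval (fun i => (k i : R)) P =
      (Nat.card {a : Triangle n // IsGT a ∧ StrictRowsAboveBottom a ∧ BottomRow a k} : R) := by
  refine (eval_eq_intCast_of_strictMono (f := fun k => Nat.card (WeakMonotoneTriangle k))
    ?_ (fun l hl => ?_) hk).trans (Int.cast_natCast _)
  · simpa using isPolynomialOn_card_weakMonotoneTriangle n
  · rw [hP l hl, card_monotoneTriangle_eq hl, Int.cast_natCast]

/-- If a polynomial `P` agrees with the number of monotone triangles with bottom row `k`
for every strictly increasing `k`, then for every weakly increasing `k` it counts the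
Gelfand-Tsetlin patterns with bottom row `k` whose other rows are strictly increasing. -/
theorem monotone_triangle_weakly_increasing (n : ℕ) (hn : 1 ≤ n)
    (P : MvPolynomial (Fin n) ℚ)
    (hP : ∀ k : Fin n → ℤ, (∀ p q : Fin n, p < q → k p < k q) →
      MvPolynomial.eval (fun i => (k i : ℚ)) P =
        (Nat.card {a : ∀ i : Fin n, Fin (i.1 + 1) → ℤ //
          IsGT a ∧ StrictRows a ∧ BottomRow a k} : ℚ)) :
    ∀ k : Fin n → ℤ, (∀ p q : Fin n, p ≤ q → k p ≤ k q) →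
      MvPolynomial.eval (fun i => (k i : ℚ)) P =
        (Nat.card {a : ∀ i : Fin n, Fin (i.1 + 1) → ℤ //
          IsGT a ∧ StrictRowsAboveBottom a ∧ BottomRow a k} : ℚ) := fun _ hk =>
  monotone_triangle_weakly_increasing_general P
    (fun k hk => hP k fun _ _ h => hk h) fun _ _ h => hk _ _ h
end
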